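/- arXiv:1206.2765 — 3 statements merged into one kernel-verified Lean document; each statement's English description precedes it below -/
import Mathlib

section
/- Let G = ⟨a, b; Rⁿ⟩ with n > 1 and σ_a(R) = 0. If an inner automorphism of G sends a to a^{ε₀} b^k and b to b^{ε₁} (as elements of G), then ε₀ = 1, b^{ε₁} = b in G, and b^k = 1 in G. Consequently, distinct maps of the form a ↦ a^{ε₀} b^i, b ↦ b^{ε₁} that define distinct automorphisms of G lie in distinct cosets of Aut(G)/Inn(G). -/
def innAut (G : Type*) [Group G] : Subgroup (MulAut G) := (MulAut.conj : G →* MulAut G).range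

instance innAut_normal (G : Type*) [Group G] : (innAut G).Normal := by
  constructor
  rintro x ⟨g, rfl⟩ f
  refine ⟨f g, ?_⟩
  ext h
  simp [MulAut.conj_apply, MulAut.mul_apply, mul_assoc]

abbrev Out (G : Type*) [Group G] := MulAut G ⧸ innAut G

def ResiduallyFinite (G : Type*) [Group G] : Prop :=
  ∀ g : G, g ≠ 1 → ∃ N : Subgroup G, N.Normal ∧ Finite (G ⧸ N) ∧ g ∉ N

noncomputable def expSum (i : Fin 2) : FreeGroup (Fin 2) →* Multiplicative ℤ :=
  FreeGroup.lift (fun j => Multiplicative.ofAdd (if j = i then (1 : ℤ) else 0))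

noncomputable def σ (i : Fin 2) (w : FreeGroup (Fin 2)) : ℤ :=
  Multiplicative.toAdd (expSum i w)

def NielsenEquiv {G : Type*} [Group G] {n : ℕ} (Y Z : Fin n → G) : Prop :=
  ∃ φ : FreeGroup (Fin n) ≃* FreeGroup (Fin n),
    ∀ i, FreeGroup.lift Y (φ (FreeGroup.of i)) = Z i

def SameTSystem {G : Type*} [Group G] {n : ℕ} (Y Z : Fin n → G) : Prop :=
  ∃ ψ : G ≃* G, NielsenEquiv (fun i => ψ (Y i)) Z

section

open Matrix Polynomial

/-- The hyperbolic matrix with rows `(2, 1)` and `(1, 1)`. -/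
def catMatrix : Matrix.SpecialLinearGroup (Fin 2) ℤ :=
  ⟨!![2, 1; 1, 1], by simp [det_fin_two_of]⟩

theorem catMatrix_pow_entries (k : ℕ) :
    ∃ q r : ℤ, ((catMatrix ^ k : Matrix.SpecialLinearGroup (Fin 2) ℤ) : Matrix (Fin 2) (Fin 2) ℤ) =
      !![q + r, q; q, r] ∧ (q + r) * r - q * q = 1 ∧ 0 ≤ q ∧ 0 < r ∧
      (k ≠ 0 → 0 < q) := by
  induction k with
  | zero =>
    exact ⟨0, 1, by simp [Matrix.one_fin_two], by norm_num, by norm_num, by norm_num, by simp⟩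
  | succ k ih =>
    obtain ⟨q, r, h, hd, hq, hr, -⟩ := ih
    refine ⟨2 * q + r, q + r, ?_, by linear_combination hd, by omega, by omega, by omega⟩
    rw [pow_succ]
    refine (Matrix.SpecialLinearGroup.coe_mul _ _).trans ?_
    rw [h, catMatrix]
    ext i j
    fin_cases i <;> fin_cases j <;> simp [Matrix.mul_apply, Fin.sum_univ_two] <;> ring

theorem catMatrix_zpow_entries (k : ℤ) :
    ∃ q r : ℤ, ((catMatrix ^ k : Matrix.SpecialLinearGroup (Fin 2) ℤ) : Matrix (Fin 2) (Fin 2) ℤ) =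
      !![q + r, q; q, r] ∧ (q + r) * r - q * q = 1 ∧
      (k ≠ 0 → q ≠ 0 ∧ r ≠ 0 ∧ q + r ≠ 0 ∧ 3 ≤ q + 2 * r) := by
  obtain ⟨n, rfl | rfl⟩ := k.eq_nat_or_neg
  · obtain ⟨q, r, h, hd, hq, hr, hk⟩ := catMatrix_pow_entries n
    refine ⟨q, r, by simpa using h, hd, fun hn => ?_⟩
    have := hk (by simpa using hn)
    omega
  · obtain ⟨q, r, h, hd, hq, hr, hk⟩ := catMatrix_pow_entries n
    refine ⟨-q, q + r, ?_, by linear_combination hd, fun hn => ?_⟩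
    · rw [_root_.zpow_neg, zpow_natCast]
      refine (Matrix.SpecialLinearGroup.coe_inv _).trans ?_
      rw [h, adjugate_fin_two_of]
      simp
    · have := hk (by simpa using hn)
      omega

theorem catMatrix_zpow_neg_one :
    ((catMatrix ^ (-1 : ℤ) : Matrix.SpecialLinearGroup (Fin 2) ℤ) : Matrix (Fin 2) (Fin 2) ℤ) =
      !![-1 + 2, -1; -1, 2] := by
  rw [_root_.zpow_neg_one]
  refine (Matrix.SpecialLinearGroup.coe_inv _).trans ?_
  rw [catMatrix, adjugate_fin_two_of]
  norm_num

section Representation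

variable {K : Type*} [CommRing K]

/-- The diagonal matrix with entries `s` and `1`. -/
def diagOne : Kˣ →* GL (Fin 2) K where
  toFun s := ⟨!![(s : K), 0; 0, 1], !![((s⁻¹ : Kˣ) : K), 0; 0, 1],
    by simp [Matrix.one_fin_two], by simp [Matrix.one_fin_two]⟩
  map_one' := by ext i j; fin_cases i <;> fin_cases j <;> simp
  map_mul' s t := by ext i j; fin_cases i <;> fin_cases j <;> simp

theorem coe_diagOne (s : Kˣ) : (diagOne s : Matrix (Fin 2) (Fin 2) K) = !![(s : K), 0; 0, 1] := rfl

/-- The matrix `catMatrix` with entries in a commutative ring. -/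
def catGL (K : Type*) [CommRing K] : GL (Fin 2) K := Matrix.SpecialLinearGroup.mapGL K catMatrix

theorem coe_catGL_zpow {k q r : ℤ}
    (h : ((catMatrix ^ k : Matrix.SpecialLinearGroup (Fin 2) ℤ) : Matrix (Fin 2) (Fin 2) ℤ) =
      !![q + r, q; q, r]) :
    ((catGL K ^ k : GL (Fin 2) K) : Matrix (Fin 2) (Fin 2) K) =
      !![(q : K) + r, (q : K); (q : K), (r : K)] := by
  rw [catGL, ← map_zpow, Matrix.SpecialLinearGroup.mapGL_coe_matrix]
  change (Int.castRingHom K).mapMatrix (catMatrix ^ k : Matrix.SpecialLinearGroup (Fin 2) ℤ).1 = _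
  rw [h]
  ext i j
  fin_cases i <;> fin_cases j <;> simp

theorem coe_catGL : (catGL K : Matrix (Fin 2) (Fin 2) K) = !![2, 1; 1, 1] := by
  have h : ((catMatrix ^ (1 : ℤ) : Matrix.SpecialLinearGroup (Fin 2) ℤ) :
      Matrix (Fin 2) (Fin 2) ℤ) =
      !![1 + 1, 1; 1, 1] := by
    rw [_root_.zpow_one, catMatrix]
    norm_num
  rw [← _root_.zpow_one (catGL K), coe_catGL_zpow h]
  norm_num [one_add_one_eq_two]

theorem det_catGL : GeneralLinearGroup.det (catGL K) = 1 :=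
  Matrix.SpecialLinearGroup.det_mapGL _

/-- The representation sending the first generator to a diagonal matrix and the second one
to the hyperbolic matrix. -/
def catRep (s : Kˣ) : FreeGroup (Fin 2) →* GL (Fin 2) K :=
  FreeGroup.lift ![diagOne s, catGL K]

@[simp]
theorem catRep_zero (s : Kˣ) : catRep s (FreeGroup.of 0) = diagOne s := by simp [catRep]

@[simp]
theorem catRep_one (s : Kˣ) : catRep s (FreeGroup.of 1) = catGL K := by simp [catRep]

theorem map_catRep {S : Type*} [CommRing S] (f : K →+* S) (s : Kˣ) (w : FreeGroup (Fin 2)) :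
    GeneralLinearGroup.map f (catRep s w) = catRep (Units.map f s) w := by
  have : (GeneralLinearGroup.map f).comp (catRep s) = catRep (Units.map f s) := by
    ext i a b
    fin_cases i
    · fin_cases a <;> fin_cases b <;> simp [coe_diagOne]
    · fin_cases a <;> fin_cases b <;> simp [coe_catGL, map_ofNat]
  exact DFunLike.congr_fun this w

end Representation

/-! ### Conjugation of the generators in the representation -/

theorem trace_conj_eq {K : Type*} [CommRing K] {M X Y : GL (Fin 2) K} {c : Kˣ}
    (h : M * X * M⁻¹ = GeneralLinearGroup.scalar (Fin 2) c * Y) :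
    trace X.1 = c * trace Y.1 := by
  have h1 : trace (M * X * M⁻¹).1 = trace X.1 := by
    rw [mul_assoc, Units.val_mul, trace_mul_comm, ← Units.val_mul]
    simp
  rw [← h1, h, Units.val_mul, GeneralLinearGroup.coe_scalar]
  simp [trace_fin_two]
  ring

theorem sq_eq_one_of_conj_eq {K : Type*} [CommRing K] {M X Y : GL (Fin 2) K} {c : Kˣ}
    (h : M * X * M⁻¹ = GeneralLinearGroup.scalar (Fin 2) c * Y)
    (hd : GeneralLinearGroup.det X = GeneralLinearGroup.det Y) : c ^ 2 = 1 := by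
  have := congrArg GeneralLinearGroup.det h
  simpa [mul_assoc, mul_comm, hd, GeneralLinearGroup.det_scalar] using this

theorem coe_eq_one_or_neg_one {c : ℂˣ} (h : c ^ 2 = 1) : (c : ℂ) = 1 ∨ (c : ℂ) = -1 := by
  have := congrArg Units.val h
  simpa using this

theorem eq_one_of_conj_catGL {M : GL (Fin 2) ℂ} {c : ℂˣ} {ε : ℤ} (hε : ε = 1 ∨ ε = -1)
    (h : M * catGL ℂ * M⁻¹ = GeneralLinearGroup.scalar (Fin 2) c * catGL ℂ ^ ε) : c = 1 := by
  have ht := trace_conj_eq h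
  have h3 : trace (catGL ℂ ^ ε).1 = 3 := by
    rcases hε with rfl | rfl
    · rw [_root_.zpow_one, coe_catGL]; simp [trace_fin_two]; norm_num
    · rw [coe_catGL_zpow catMatrix_zpow_neg_one]; simp [trace_fin_two]; norm_num
  rw [h3, coe_catGL] at ht
  simp [trace_fin_two] at ht
  ext
  push_cast
  linear_combination -(1 / 3 : ℂ) * ht

theorem eq_zero_of_conj_catGL {M : GL (Fin 2) ℂ} {s c c' : ℂˣ} {k : ℤ}
    (hb : M * catGL ℂ * M⁻¹ = GeneralLinearGroup.scalar (Fin 2) c' * catGL ℂ ^ (1 : ℤ))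
    (ha : M * diagOne s * M⁻¹ = GeneralLinearGroup.scalar (Fin 2) c * (diagOne s * catGL ℂ ^ k)) :
    k = 0 := by
  by_contra hk
  obtain rfl := eq_one_of_conj_catGL (.inl rfl) hb
  have hc := coe_eq_one_or_neg_one
    (sq_eq_one_of_conj_eq ha (by simp [det_catGL]))
  have hab : M * (diagOne s * catGL ℂ) * M⁻¹ =
      GeneralLinearGroup.scalar (Fin 2) c * (diagOne s * catGL ℂ ^ k * catGL ℂ) := by
    have : M * (diagOne s * catGL ℂ) * M⁻¹ =
        (M * diagOne s * M⁻¹) * (M * catGL ℂ * M⁻¹) := by group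
    rw [this, ha, hb]
    simp [mul_assoc]
  obtain ⟨q, r, hB, hd, h0⟩ := catMatrix_zpow_entries k
  obtain ⟨-, -, -, h3⟩ := h0 hk
  have t1 := trace_conj_eq ha
  have t2 := trace_conj_eq hab
  simp only [Units.val_mul, coe_catGL_zpow hB, coe_catGL, coe_diagOne] at t1 t2
  simp [trace_fin_two] at t1 t2
  have hd' : ((q : ℂ) + r) * r - q * q = 1 := by exact_mod_cast hd
  rcases hc with hc | hc <;> rw [hc] at t1 t2
  · have : (q : ℂ) + 2 * r - 2 = 0 := by
      linear_combination (3 * (q : ℂ) + 2 * r - 2) * t1 - ((q : ℂ) + r - 1) * t2 + hd'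
    norm_cast at this
    omega
  · have : (q : ℂ) + 2 * r + 2 = 0 := by
      linear_combination (3 * (q : ℂ) + 2 * r + 2) * t1 - ((q : ℂ) + r + 1) * t2 - hd'
    norm_cast at this
    omega

theorem eq_one_or_neg_one_of_conj_catGL_inv {M : GL (Fin 2) ℂ} {s c c' : ℂˣ}
    (hb : M * catGL ℂ * M⁻¹ = GeneralLinearGroup.scalar (Fin 2) c' * catGL ℂ ^ (-1 : ℤ))
    (ha : M * diagOne s * M⁻¹ = GeneralLinearGroup.scalar (Fin 2) c * diagOne s) :
    s = 1 ∨ s = -1 := by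
  obtain rfl := eq_one_of_conj_catGL (.inr rfl) hb
  have hc := coe_eq_one_or_neg_one (sq_eq_one_of_conj_eq ha rfl)
  have hab : M * (diagOne s * catGL ℂ) * M⁻¹ =
      GeneralLinearGroup.scalar (Fin 2) c * (diagOne s * catGL ℂ ^ (-1 : ℤ)) := by
    have : M * (diagOne s * catGL ℂ) * M⁻¹ =
        (M * diagOne s * M⁻¹) * (M * catGL ℂ * M⁻¹) := by group
    rw [this, ha, hb]
    simp [mul_assoc]
  have t := trace_conj_eq hab
  simp only [Units.val_mul, coe_catGL_zpow catMatrix_zpow_neg_one, coe_catGL, coe_diagOne] at t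
  simp [trace_fin_two] at t
  rcases hc with hc | hc <;> rw [hc] at t
  · left; ext; push_cast; linear_combination t
  · right; ext; push_cast; linear_combination (1 / 3 : ℂ) * t

/-! ### Exponent sums -/

theorem σ_one (i : Fin 2) : σ i 1 = 0 := by simp [σ]

theorem σ_mul (i : Fin 2) (x y : FreeGroup (Fin 2)) : σ i (x * y) = σ i x + σ i y := by
  simp [σ]

theorem σ_inv (i : Fin 2) (x : FreeGroup (Fin 2)) : σ i x⁻¹ = -σ i x := by
  simp [σ]

theorem σ_zpow (i : Fin 2) (x : FreeGroup (Fin 2)) (k : ℤ) : σ i (x ^ k) = k * σ i x := by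
  simp [σ]

theorem σ_pow (i : Fin 2) (x : FreeGroup (Fin 2)) (k : ℕ) : σ i (x ^ k) = k * σ i x := by
  simp [σ]

theorem σ_of (i j : Fin 2) : σ i (FreeGroup.of j) = if j = i then 1 else 0 := by
  simp [σ, expSum]

theorem σ_eq_of_isConj (i : Fin 2) {x y : FreeGroup (Fin 2)} (h : IsConj x y) : σ i x = σ i y := by
  obtain ⟨c, rfl⟩ := isConj_iff.1 h
  simp only [σ_mul, σ_inv]
  ring

/-! ### Cyclic normal forms -/

section Syllables

variable {G : Type*} [Group G]

/-- The product of the words `x ^ α * y ^ β` over a list of pairs `(α, β)`. -/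
def syllableProd (x y : G) (L : List (ℤ × ℤ)) : G :=
  (L.map fun p => x ^ p.1 * y ^ p.2).prod

theorem syllableProd_append (x y : G) (L L' : List (ℤ × ℤ)) :
    syllableProd x y (L ++ L') = syllableProd x y L * syllableProd x y L' := by
  simp [syllableProd]

theorem syllableProd_cons (x y : G) (p : ℤ × ℤ) (L : List (ℤ × ℤ)) :
    syllableProd x y (p :: L) = x ^ p.1 * y ^ p.2 * syllableProd x y L := by
  simp [syllableProd]

theorem syllableProd_nil (x y : G) : syllableProd x y [] = 1 := rfl

theorem isConj_mul_comm (x y : G) : IsConj (x * y) (y * x) :=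
  isConj_iff.2 ⟨x⁻¹, by group⟩

theorem exists_isConj_syllableProd (x y : G) (n : ℕ) :
    ∀ L : List (ℤ × ℤ), L.length ≤ n →
      (∃ m : ℤ, IsConj (syllableProd x y L) (y ^ m)) ∨
      (∃ m : ℤ, IsConj (syllableProd x y L) (x ^ m)) ∨
      ∃ L' : List (ℤ × ℤ), L' ≠ [] ∧ (∀ p ∈ L', p.1 ≠ 0 ∧ p.2 ≠ 0) ∧
        IsConj (syllableProd x y L) (syllableProd x y L') := by
  induction n with
  | zero =>
    intro L hL
    obtain rfl : L = [] := List.length_eq_zero_iff.1 (by omega)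
    exact .inl ⟨0, by simp [syllableProd_nil]⟩
  | succ n ih =>
    intro L hL
    by_cases hgood : ∀ p ∈ L, p.1 ≠ 0 ∧ p.2 ≠ 0
    · rcases eq_or_ne L [] with rfl | hne
      · exact .inl ⟨0, by simp [syllableProd_nil]⟩
      · exact .inr (.inr ⟨L, hne, hgood, IsConj.refl _⟩)
    · push Not at hgood
      obtain ⟨⟨α, β⟩, hp, hbad⟩ := hgood
      obtain ⟨L₁, L₂, rfl⟩ := List.append_of_mem hp
      have hrot : IsConj (syllableProd x y (L₁ ++ (α, β) :: L₂))
          (x ^ α * y ^ β * syllableProd x y (L₂ ++ L₁)) := by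
        have := isConj_mul_comm (syllableProd x y L₁) (syllableProd x y ((α, β) :: L₂))
        simpa only [syllableProd_append, syllableProd_cons, mul_assoc] using this
      have hlen : (L₂ ++ L₁).length ≤ n := by
        simp only [List.length_append, List.length_cons] at hL ⊢
        omega
      suffices h : (∃ m : ℤ, IsConj (syllableProd x y (L₁ ++ (α, β) :: L₂)) (y ^ m)) ∨
          (∃ m : ℤ, IsConj (syllableProd x y (L₁ ++ (α, β) :: L₂)) (x ^ m)) ∨
          ∃ M : List (ℤ × ℤ), M.length ≤ n ∧
            IsConj (syllableProd x y (L₁ ++ (α, β) :: L₂)) (syllableProd x y M) by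
        rcases h with h | h | ⟨M, hM, hc⟩
        · exact .inl h
        · exact .inr (.inl h)
        · rcases ih M hM with ⟨m, h⟩ | ⟨m, h⟩ | ⟨L', h1, h2, h⟩
          · exact .inl ⟨m, hc.trans h⟩
          · exact .inr (.inl ⟨m, hc.trans h⟩)
          · exact .inr (.inr ⟨L', h1, h2, hc.trans h⟩)
      generalize L₂ ++ L₁ = M at hrot hlen
      by_cases hα : α = 0
      · subst hα
        rcases List.eq_nil_or_concat M with rfl | ⟨M', ⟨u, v⟩, rfl⟩
        · exact .inl ⟨β, by simpa [syllableProd_nil] using hrot⟩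
        · refine .inr (.inr ⟨M' ++ [(u, v + β)], by simpa using hlen, hrot.trans ?_⟩)
          have : syllableProd x y (M' ++ [(u, v + β)]) =
              syllableProd x y (M' ++ [(u, v)]) * y ^ β := by
            simp [syllableProd_append, syllableProd_cons, syllableProd_nil, _root_.zpow_add,
              mul_assoc]
          rw [this]
          simpa using isConj_mul_comm (y ^ β) (syllableProd x y (M' ++ [(u, v)]))
      · obtain rfl : β = 0 := hbad hα
        rcases M with _ | ⟨⟨u, v⟩, M'⟩
        · exact .inr (.inl ⟨α, by simpa [syllableProd_nil] using hrot⟩)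
        · refine .inr (.inr ⟨(α + u, v) :: M', by simpa using hlen, ?_⟩)
          simpa [syllableProd_cons, _root_.zpow_add, mul_assoc] using hrot

end Syllables

theorem exists_eq_syllableProd (w : FreeGroup (Fin 2)) :
    ∃ L, w = syllableProd (FreeGroup.of 0) (FreeGroup.of 1) L := by
  induction w using FreeGroup.induction_on with
  | C1 => exact ⟨[], rfl⟩
  | of i =>
    fin_cases i
    · exact ⟨[(1, 0)], by simp [syllableProd]⟩
    · exact ⟨[(0, 1)], by simp [syllableProd]⟩
  | inv_of i _ =>
    fin_cases i
    · exact ⟨[(-1, 0)], by simp [syllableProd]⟩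
    · exact ⟨[(0, -1)], by simp [syllableProd]⟩
  | mul x y hx hy =>
    obtain ⟨L, rfl⟩ := hx
    obtain ⟨L', rfl⟩ := hy
    exact ⟨L ++ L', (syllableProd_append _ _ _ _).symm⟩

theorem σ_zero_syllableProd (L : List (ℤ × ℤ)) :
    σ 0 (syllableProd (FreeGroup.of 0) (FreeGroup.of 1) L) = (L.map Prod.fst).sum := by
  induction L with
  | nil => simp [syllableProd_nil, σ_one]
  | cons p L ih => simp [syllableProd_cons, σ_mul, σ_zpow, σ_of, ih]

/-- A word of exponent sum zero in the first generator is conjugate to a power of the second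
generator or to a product of syllables with nonzero exponents. -/
theorem exists_cyclic_normal_form {w : FreeGroup (Fin 2)} (hw : σ 0 w = 0) :
    (∃ m : ℤ, IsConj w (FreeGroup.of 1 ^ m)) ∨
      ∃ L : List (ℤ × ℤ), L ≠ [] ∧ (∀ p ∈ L, p.1 ≠ 0 ∧ p.2 ≠ 0) ∧ (L.map Prod.fst).sum = 0 ∧
        IsConj w (syllableProd (FreeGroup.of 0) (FreeGroup.of 1) L) := by
  obtain ⟨L, rfl⟩ := exists_eq_syllableProd w
  rcases exists_isConj_syllableProd (FreeGroup.of (0 : Fin 2)) (FreeGroup.of 1) _ L le_rfl with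
    h | ⟨m, h⟩ | ⟨L', h1, h2, h⟩
  · exact .inl h
  · have := σ_eq_of_isConj 0 h
    rw [hw, σ_zpow, σ_of] at this
    obtain rfl : m = 0 := by simpa using this.symm
    exact .inl ⟨0, by simpa using h⟩
  · refine .inr ⟨L', h1, h2, ?_, h⟩
    rw [← σ_zero_syllableProd, ← σ_eq_of_isConj 0 h, hw]

/-! ### Trace polynomials -/

theorem exists_row_prod_single_mul {ι K : Type*} [Fintype ι] [DecidableEq ι] [CommRing K]
    [IsDomain K] :
    ∀ L : List (ι × Matrix ι ι K), L ≠ [] → (∀ p ∈ L, ∀ i j, p.2 i j ≠ 0) →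
      ∃ i : ι, ∀ x y : ι,
        ((L.map fun p => Matrix.single p.1 p.1 1 * p.2).prod : Matrix ι ι K) x y ≠ 0 ↔ x = i
  | [], h, _ => absurd rfl h
  | [p], _, h => by
    refine ⟨p.1, fun x y => ?_⟩
    by_cases hx : x = p.1
    · subst hx
      simp [h p]
    · simp [hx, Matrix.single_mul_apply_of_ne]
  | p :: q :: L, _, h => by
    obtain ⟨j, hj⟩ := exists_row_prod_single_mul (q :: L) (by simp)
      fun r hr => h r (List.mem_cons_of_mem _ hr)
    refine ⟨p.1, fun x y => ?_⟩
    rw [List.map_cons, List.prod_cons, mul_assoc]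
    generalize ((q :: L).map fun p => Matrix.single p.1 p.1 1 * p.2).prod = P at hj
    by_cases hx : x = p.1
    · subst hx
      rw [Matrix.single_mul_apply_same, one_mul, Matrix.mul_apply, Finset.sum_eq_single j]
      · simp [h p, hj]
      · intro z _ hz
        simp [not_not.1 (mt (hj z y).1 hz)]
      · simp
    · simp [hx, Matrix.single_mul_apply_of_ne]

theorem trace_prod_single_mul_ne_zero {ι K : Type*} [Fintype ι] [DecidableEq ι] [CommRing K]
    [IsDomain K] {L : List (ι × Matrix ι ι K)} (hL : L ≠ []) (h : ∀ p ∈ L, ∀ i j, p.2 i j ≠ 0) :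
    trace (L.map fun p => Matrix.single p.1 p.1 1 * p.2).prod ≠ 0 := by
  obtain ⟨i, hi⟩ := exists_row_prod_single_mul L hL h
  rw [trace, Finset.sum_eq_single i]
  · simp [hi]
  · intro x _ hx
    exact not_not.1 (mt (hi x x).1 hx)
  · simp

/-- Entrywise, `M` has degree at most `d` and the coefficients of `X ^ d` form `E`. -/
def HasTopCoeff {ι K : Type*} [CommRing K] (M : Matrix ι ι K[X]) (d : ℕ) (E : Matrix ι ι K) :
    Prop :=
  ∀ i j, (M i j).natDegree ≤ d ∧ (M i j).coeff d = E i j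

theorem HasTopCoeff.mul {ι K : Type*} [Fintype ι] [CommRing K] {M N : Matrix ι ι K[X]} {d e : ℕ}
    {E F : Matrix ι ι K} (hM : HasTopCoeff M d E) (hN : HasTopCoeff N e F) :
    HasTopCoeff (M * N) (d + e) (E * F) := by
  intro i j
  rw [Matrix.mul_apply, Matrix.mul_apply]
  constructor
  · exact natDegree_sum_le_of_forall_le _ _ fun x _ =>
      natDegree_mul_le_of_le (hM i x).1 (hN x j).1
  · rw [finsetSum_coeff]
    refine Finset.sum_congr rfl fun x _ => ?_
    rw [coeff_mul_add_eq_of_natDegree_le (hM i x).1 (hN x j).1, (hM i x).2, (hN x j).2]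

theorem hasTopCoeff_one {ι K : Type*} [DecidableEq ι] [CommRing K] :
    HasTopCoeff (1 : Matrix ι ι K[X]) 0 1 := by
  intro i j
  by_cases h : i = j <;> simp [h, Matrix.one_apply]

/-- The polynomial matrix proportional, after evaluation at `s`, to the image of a syllable. -/
noncomputable def polySyllable (p : ℤ × ℤ) : Matrix (Fin 2) (Fin 2) ℂ[X] :=
  !![X ^ p.1.toNat, 0; 0, X ^ (-p.1).toNat] *
    (C : ℂ →+* ℂ[X]).mapMatrix (catGL ℂ ^ p.2 : GL (Fin 2) ℂ).1

theorem catGL_zpow_apply_ne_zero {k : ℤ} (hk : k ≠ 0) (i j : Fin 2) :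
    (catGL ℂ ^ k : GL (Fin 2) ℂ).1 i j ≠ 0 := by
  obtain ⟨q, r, h, -, h0⟩ := catMatrix_zpow_entries k
  obtain ⟨hq, hr, hqr, -⟩ := h0 hk
  rw [coe_catGL_zpow h]
  fin_cases i <;> fin_cases j <;> simp [hq, hr]
  exact_mod_cast hqr

theorem hasTopCoeff_polySyllable {p : ℤ × ℤ} (hp : p.1 ≠ 0) :
    HasTopCoeff (polySyllable p) p.1.natAbs
      (Matrix.single (if 0 < p.1 then 0 else 1) (if 0 < p.1 then 0 else 1) 1 *
        (catGL ℂ ^ p.2 : GL (Fin 2) ℂ).1) := by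
  obtain ⟨α, β⟩ := p
  obtain ⟨n, rfl | rfl⟩ := α.eq_nat_or_neg
  · have hn : 0 < n := by simpa [Nat.pos_iff_ne_zero] using hp
    intro i j
    fin_cases i
    · simp [polySyllable, Matrix.mul_apply, Fin.sum_univ_two, hn, coeff_X_pow, Matrix.single_apply]
      compute_degree
    · simp [polySyllable, Matrix.mul_apply, Fin.sum_univ_two, hn, coeff_C, hn.ne']
  · have hn : 0 < n := by simpa [Nat.pos_iff_ne_zero] using hp
    have hn' : ¬ (n : ℤ) < 0 := by omega
    intro i j
    fin_cases i
    · simp [polySyllable, Matrix.mul_apply, Fin.sum_univ_two, coeff_C, hn.ne', hn']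
    · simp [polySyllable, Matrix.mul_apply, Fin.sum_univ_two, coeff_X_pow, hn']
      compute_degree

theorem eval_zero_polySyllable {p : ℤ × ℤ} (hp : p.1 ≠ 0) :
    (evalRingHom 0).mapMatrix (polySyllable p) =
      Matrix.single (if 0 < p.1 then 1 else 0) (if 0 < p.1 then 1 else 0) 1 *
        (catGL ℂ ^ p.2 : GL (Fin 2) ℂ).1 := by
  obtain ⟨α, β⟩ := p
  rw [polySyllable, map_mul]
  congr 1
  · obtain ⟨n, rfl | rfl⟩ := α.eq_nat_or_neg <;>
    · have hn : 0 < n := by simpa [Nat.pos_iff_ne_zero] using hp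
      have hn' : ¬ (n : ℤ) < 0 := by omega
      ext i j
      fin_cases i <;> fin_cases j <;> simp [hn, hn', hn.ne']
  · ext i j
    simp

theorem eval_polySyllable (s : ℂˣ) (p : ℤ × ℤ) :
    (evalRingHom (s : ℂ)).mapMatrix (polySyllable p) =
      (s : ℂ) ^ (-p.1).toNat • (diagOne s ^ p.1 * catGL ℂ ^ p.2 : GL (Fin 2) ℂ).1 := by
  obtain ⟨α, β⟩ := p
  rw [← map_zpow, Units.val_mul, coe_diagOne, polySyllable, map_mul, ← smul_mul_assoc]
  congr 1
  · obtain ⟨n, rfl | rfl⟩ := α.eq_nat_or_neg <;> ext i j <;> fin_cases i <;> fin_cases j <;> simp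
  · ext i j
    simp

/-- The product of the polynomial matrices of a list of syllables. -/
noncomputable def polyProd (L : List (ℤ × ℤ)) : Matrix (Fin 2) (Fin 2) ℂ[X] :=
  (L.map polySyllable).prod

theorem eval_polyProd (s : ℂˣ) (L : List (ℤ × ℤ)) :
    (evalRingHom (s : ℂ)).mapMatrix (polyProd L) =
      (s : ℂ) ^ (L.map fun p => (-p.1).toNat).sum •
        (catRep s (syllableProd (FreeGroup.of 0) (FreeGroup.of 1) L)).1 := by
  induction L with
  | nil => simp [polyProd, syllableProd_nil]
  | cons p L ih =>
    rw [polyProd] at ih ⊢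
    rw [List.map_cons, List.prod_cons, map_mul, ih, eval_polySyllable, syllableProd_cons, map_mul,
      Units.val_mul, List.map_cons, List.sum_cons, smul_mul_smul_comm, pow_add]
    simp

theorem hasTopCoeff_polyProd (L : List (ℤ × ℤ)) (hL : ∀ p ∈ L, p.1 ≠ 0 ∧ p.2 ≠ 0) :
    HasTopCoeff (polyProd L) (L.map fun p => p.1.natAbs).sum
      ((L.map fun p => ((if 0 < p.1 then 0 else 1 : Fin 2),
        (catGL ℂ ^ p.2 : GL (Fin 2) ℂ).1)).map fun p => Matrix.single p.1 p.1 1 * p.2).prod := by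
  induction L with
  | nil => simpa [polyProd] using hasTopCoeff_one
  | cons p L ih =>
    have := (hasTopCoeff_polySyllable (hL p (by simp)).1).mul
      (ih fun q hq => hL q (List.mem_cons_of_mem _ hq))
    simpa [polyProd] using this

theorem eval_zero_polyProd (L : List (ℤ × ℤ)) (hL : ∀ p ∈ L, p.1 ≠ 0 ∧ p.2 ≠ 0) :
    (evalRingHom 0).mapMatrix (polyProd L) =
      ((L.map fun p => ((if 0 < p.1 then 1 else 0 : Fin 2),
        (catGL ℂ ^ p.2 : GL (Fin 2) ℂ).1)).map fun p => Matrix.single p.1 p.1 1 * p.2).prod := by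
  rw [polyProd, map_list_prod, List.map_map, List.map_map]
  congr 1
  exact List.map_congr_left fun p hp => eval_zero_polySyllable (hL p hp).1

/-- A word in normal form attains every trace in the family of representations `catRep`. -/
theorem exists_trace_catRep_eq {w : FreeGroup (Fin 2)} (hw : σ 0 w = 0)
    (hconj : ¬ ∃ m : ℤ, IsConj w (FreeGroup.of 1 ^ m)) (τ : ℂ) :
    ∃ s : ℂˣ, trace (catRep s w).1 = τ := by
  obtain ⟨L, hne, hL, hsum, h⟩ := (exists_cyclic_normal_form hw).resolve_left hconj
  set N := (L.map fun p => (-p.1).toNat).sum with hN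
  set D := (L.map fun p => p.1.natAbs).sum with hD
  have hDN : (D : ℤ) = 2 * N := by
    have : (D : ℤ) = 2 * N + (L.map Prod.fst).sum := by
      rw [hN, hD]
      clear * -
      induction L with
      | nil => simp
      | cons p L ih =>
        simp only [List.map_cons, List.sum_cons, Nat.cast_add, ih]
        omega
    omega
  have hDpos : 0 < D := by
    obtain ⟨p, L', rfl⟩ := List.exists_cons_of_ne_nil hne
    have := (hL p (by simp)).1
    simp only [hD, List.map_cons, List.sum_cons]
    omega
  have hentry : ∀ f : ℤ → Fin 2, trace ((L.map fun p => (f p.1,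
      (catGL ℂ ^ p.2 : GL (Fin 2) ℂ).1)).map fun p => Matrix.single p.1 p.1 1 * p.2).prod ≠ 0 := by
    intro f
    refine trace_prod_single_mul_ne_zero (by simpa using hne) ?_
    simp only [List.mem_map]
    rintro _ ⟨p, hp, rfl⟩ i j
    exact catGL_zpow_apply_ne_zero (hL p hp).2 i j
  set Q : ℂ[X] := trace (polyProd L) with hQ
  have htop : Q.coeff D ≠ 0 := by
    have h1 := hentry fun α => if 0 < α then 0 else 1
    have h2 := hasTopCoeff_polyProd L hL
    rwa [trace_fin_two, ← (h2 0 0).2, ← (h2 1 1).2, ← coeff_add, ← trace_fin_two] at h1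
  have hbot : Q.eval 0 ≠ 0 := by
    have h1 := hentry fun α => if 0 < α then 1 else 0
    rw [← eval_zero_polyProd L hL] at h1
    simpa [trace_fin_two, hQ] using h1
  have hcoeff : (Q - C τ * X ^ N).coeff D ≠ 0 := by
    rw [coeff_sub, coeff_C_mul_X_pow, if_neg (by omega), sub_zero]
    exact htop
  obtain ⟨s, hs⟩ := IsAlgClosed.exists_root (Q - C τ * X ^ N) (by
    intro hdeg
    have := le_degree_of_ne_zero hcoeff
    rw [hdeg] at this
    have : D ≤ 0 := by exact_mod_cast this
    omega)
  rw [IsRoot.def, eval_sub, eval_mul, eval_C, eval_pow, eval_X, sub_eq_zero] at hs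
  have hs0 : s ≠ 0 := by
    rintro rfl
    rw [zero_pow (by omega), mul_zero] at hs
    exact hbot hs
  refine ⟨Units.mk0 s hs0, ?_⟩
  have heval := congrArg trace (eval_polyProd (Units.mk0 s hs0) L)
  rw [trace_smul, ← hN] at heval
  have : trace ((evalRingHom ((Units.mk0 s hs0 : ℂˣ) : ℂ)).mapMatrix (polyProd L)) = Q.eval s := by
    simp [trace_fin_two, hQ]
  rw [this, hs, smul_eq_mul, Units.val_mk0, mul_comm] at heval
  obtain ⟨g, hg⟩ := isConj_iff.1 h
  rw [mul_left_cancel₀ (pow_ne_zero _ hs0) heval, ← hg, map_mul, map_mul, map_inv, mul_assoc,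
    Units.val_mul, trace_mul_comm, ← Units.val_mul]
  simp

/-! ### Consequences in the one-relator group -/

theorem pow_mem_center_of_trace_eq {M : GL (Fin 2) ℂ} {ω : ℂ} {n : ℕ} (hn : n ≠ 0)
    (hd : GeneralLinearGroup.det M = 1) (hω : ω ^ (2 * n) = 1) (hω2 : ω ^ 2 ≠ 1)
    (ht : trace M.1 = ω + ω⁻¹) : M ^ n ∈ Subgroup.center (GL (Fin 2) ℂ) := by
  have hω0 : ω ≠ 0 := by
    rintro rfl
    rw [zero_pow (by omega)] at hω
    exact zero_ne_one hω
  obtain ⟨v, hv⟩ : ∃ v, v = ω⁻¹ := ⟨_, rfl⟩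
  have hωv : ω * v = 1 := by rw [hv, mul_inv_cancel₀ hω0]
  rw [← hv] at ht
  have hne : ω - v ≠ 0 := by
    intro h
    apply hω2
    linear_combination ω * h + hωv
  have hdet : M.1.det = 1 := congrArg Units.val hd
  have hsq : M.1 * M.1 = (ω + v) • M.1 - 1 := by
    rw [← ht]
    rw [det_fin_two] at hdet
    ext i j
    fin_cases i <;> fin_cases j <;>
      simp [Matrix.mul_apply, Fin.sum_univ_two, trace_fin_two] <;>
      first | linear_combination -hdet | ring
  have key : ∀ j : ℕ, (ω - v) • M.1 ^ (j + 1) =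
      (ω ^ (j + 1) - v ^ (j + 1)) • M.1 - (ω ^ j - v ^ j) • (1 : Matrix (Fin 2) (Fin 2) ℂ) := by
    intro j
    induction j with
    | zero => simp
    | succ j ih =>
      rw [pow_succ, ← smul_mul_assoc, ih, sub_mul, smul_mul_assoc, hsq, smul_mul_assoc, one_mul,
        smul_sub, smul_smul]
      have h1 : (ω ^ (j + 1) - v ^ (j + 1)) * (ω + v) =
          (ω ^ (j + 1 + 1) - v ^ (j + 1 + 1)) + (ω ^ j - v ^ j) := by
        linear_combination (ω ^ j - v ^ j) * hωv
      rw [h1, add_smul]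
      abel
  obtain ⟨j, rfl⟩ := Nat.exists_eq_succ_of_ne_zero hn
  have hpow : ω ^ (j + 1) = v ^ (j + 1) := by
    have h1 : ω ^ (j + 1) * v ^ (j + 1) = 1 := by rw [← mul_pow, hωv, one_pow]
    have h2 : ω ^ (j + 1) * ω ^ (j + 1) = 1 := by rw [← pow_add, ← two_mul]; exact hω
    exact mul_left_cancel₀ (pow_ne_zero (j + 1) hω0) (h2.trans h1.symm)
  rw [GeneralLinearGroup.mem_center_iff_val_mem_range_scalar]
  refine ⟨-(ω ^ j - v ^ j) / (ω - v), ?_⟩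
  have := key j
  rw [hpow, sub_self, zero_smul, zero_sub] at this
  rw [Units.val_pow_eq_pow_val, Matrix.scalar_apply, ← Matrix.smul_one_eq_diagonal,
    div_eq_inv_mul, mul_smul, neg_smul, ← this, smul_smul, inv_mul_cancel₀ hne, one_smul]

theorem map_eq_zpow_σ_one {H : Type*} [Group H] (f : FreeGroup (Fin 2) →* H)
    (hf : f (FreeGroup.of 0) = 1) (w : FreeGroup (Fin 2)) : f w = f (FreeGroup.of 1) ^ σ 1 w := by
  have : f = (zpowersHom H (f (FreeGroup.of 1))).comp (expSum 1) := by
    ext i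
    fin_cases i <;> simp [expSum, hf]
  exact DFunLike.congr_fun this w

theorem map_eq_zpow_σ_zero {H : Type*} [Group H] (f : FreeGroup (Fin 2) →* H)
    (hf : f (FreeGroup.of 1) = 1) (w : FreeGroup (Fin 2)) : f w = f (FreeGroup.of 0) ^ σ 0 w := by
  have : f = (zpowersHom H (f (FreeGroup.of 0))).comp (expSum 0) := by
    ext i
    fin_cases i <;> simp [expSum, hf]
  exact DFunLike.congr_fun this w

theorem det_catRep {K : Type*} [CommRing K] (s : Kˣ) {w : FreeGroup (Fin 2)} (hw : σ 0 w = 0) :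
    GeneralLinearGroup.det (catRep s w) = 1 := by
  have := map_eq_zpow_σ_zero (GeneralLinearGroup.det.comp (catRep s)) (by simp [det_catGL]) w
  simpa [hw] using this

/-- The endomorphism `a ↦ a * b ^ l`, `b ↦ b`. -/
def shear (l : ℤ) : FreeGroup (Fin 2) →* FreeGroup (Fin 2) :=
  FreeGroup.lift ![FreeGroup.of 0 * FreeGroup.of 1 ^ l, FreeGroup.of 1]

theorem shear_zero (l : ℤ) :
    shear l (FreeGroup.of 0) = FreeGroup.of 0 * FreeGroup.of 1 ^ l := by simp [shear]

theorem shear_one (l : ℤ) : shear l (FreeGroup.of 1) = FreeGroup.of 1 := by simp [shear]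

theorem shear_neg_shear (l : ℤ) (w : FreeGroup (Fin 2)) : shear (-l) (shear l w) = w := by
  have : (shear (-l)).comp (shear l) = MonoidHom.id _ := by
    ext i
    fin_cases i <;> simp [shear_zero, shear_one]
  exact DFunLike.congr_fun this w

theorem σ_zero_shear (l : ℤ) (w : FreeGroup (Fin 2)) : σ 0 (shear l w) = σ 0 w := by
  have : (expSum 0).comp (shear l) = expSum 0 := by
    ext i
    fin_cases i <;> simp [shear_zero, shear_one, expSum]
  exact congrArg Multiplicative.toAdd (DFunLike.congr_fun this w)

theorem σ_one_shear (l : ℤ) {w : FreeGroup (Fin 2)} (hw : σ 0 w = 0) :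
    σ 1 (shear l w) = σ 1 w := by
  have : (expSum 1).comp (shear l) = expSum 1 * (zpowersHom _ (.ofAdd l)).comp (expSum 0) := by
    ext i
    fin_cases i <;> simp [shear_zero, shear_one, expSum]
  have h : σ 1 (shear l w) = σ 1 w + σ 0 w * l := by
    simpa [σ] using congrArg Multiplicative.toAdd (DFunLike.congr_fun this w)
  rw [h, hw, zero_mul, add_zero]

theorem trace_catRep_ne_zero {s : ℂˣ} (hs : s = 1 ∨ s = -1) {w : FreeGroup (Fin 2)}
    (hw : σ 1 w = 1 ∨ σ 1 w = -1) : trace (catRep s w).1 ≠ 0 := by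
  obtain ⟨t, rfl⟩ : ∃ t : ℤˣ, s = Units.map (Int.castRingHom ℂ) t := by
    rcases hs with rfl | rfl
    · exact ⟨1, by simp⟩
    · exact ⟨-1, by ext; simp⟩
  have htrace : ∀ {S : Type} [CommRing S] (f : ℤ →+* S),
      trace (catRep (Units.map f t) w).1 = f (trace (catRep t w).1) := by
    intro S _ f
    rw [← map_catRep]
    simp [trace_fin_two]
  have hmod : trace (catRep (K := ZMod 2) (Units.map (Int.castRingHom (ZMod 2)) t) w).1 = 1 := by
    rw [Subsingleton.elim (α := (ZMod 2)ˣ) (Units.map (Int.castRingHom (ZMod 2)) t) 1,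
      map_eq_zpow_σ_one (catRep 1) (by simp), catRep_one]
    rcases hw with h | h <;> rw [h]
    · rw [_root_.zpow_one, coe_catGL]; simp [trace_fin_two]; rfl
    · rw [coe_catGL_zpow catMatrix_zpow_neg_one]; simp [trace_fin_two]; rfl
  intro h0
  rw [htrace] at h0 hmod
  have : trace (catRep t w).1 = 0 := by simpa using h0
  rw [this, map_zero] at hmod
  exact zero_ne_one hmod

section OneRelator

variable {r : FreeGroup (Fin 2)}

theorem mul_inv_mem_of_mk_eq {x y : FreeGroup (Fin 2)} {N : Subgroup (FreeGroup (Fin 2))}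
    [N.Normal] (hr : r ∈ N)
    (h : PresentedGroup.mk {r} x = PresentedGroup.mk {r} y) : x * y⁻¹ ∈ N := by
  rw [← mul_inv_eq_one, ← map_inv, ← map_mul, PresentedGroup.mk_eq_one_iff] at h
  exact Subgroup.normalClosure_le_normal (by simpa using hr) h

theorem dvd_σ_sub_of_mk_eq (i : Fin 2) {x y : FreeGroup (Fin 2)}
    (h : PresentedGroup.mk {r} x = PresentedGroup.mk {r} y) : σ i r ∣ σ i x - σ i y := by
  have := mul_inv_mem_of_mk_eq
    (N := (Subgroup.zpowers (expSum i r)).comap (expSum i)) (Subgroup.mem_zpowers _) h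
  obtain ⟨k, hk⟩ := Subgroup.mem_zpowers_iff.1 (Subgroup.mem_comap.1 this)
  have hk := congrArg Multiplicative.toAdd hk
  have hk : k * σ i r = σ i (x * y⁻¹) := by simpa [σ] using hk
  rw [σ_mul, σ_inv] at hk
  exact ⟨k, by linear_combination -hk⟩

theorem exists_scalar_of_mk_eq {x y : FreeGroup (Fin 2)} (ρ : FreeGroup (Fin 2) →* GL (Fin 2) ℂ)
    (hr : ρ r ∈ Subgroup.center (GL (Fin 2) ℂ))
    (h : PresentedGroup.mk {r} x = PresentedGroup.mk {r} y) :
    ∃ c : ℂˣ, ρ x = GeneralLinearGroup.scalar (Fin 2) c * ρ y := by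
  have := mul_inv_mem_of_mk_eq (N := (Subgroup.center (GL (Fin 2) ℂ)).comap ρ) hr h
  rw [Subgroup.mem_comap, GeneralLinearGroup.center_eq_range_scalar] at this
  obtain ⟨c, hc⟩ := this
  exact ⟨c, by rw [hc, map_mul, map_inv, inv_mul_cancel_right]⟩

end OneRelator

section Main

variable {R : FreeGroup (Fin 2)} {n : ℕ}

/-- If `R` is not conjugate to a power of `b`, some representation sends `R` to an element of
order dividing `n` modulo scalars. -/
theorem exists_catRep_pow_mem_center (hn : 1 < n) (hσ : σ 0 R = 0)
    (hR : ¬ ∃ m : ℤ, IsConj R (FreeGroup.of 1 ^ m)) :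
    ∃ s : ℂˣ, catRep s (R ^ n) ∈ Subgroup.center (GL (Fin 2) ℂ) ∧
      (n = 2 → trace (catRep s R).1 = 0) := by
  obtain ⟨ω, hω⟩ : ∃ ω : ℂ, IsPrimitiveRoot ω (2 * n) :=
    ⟨_, Complex.isPrimitiveRoot_exp _ (by omega)⟩
  have hω2 : ω ^ 2 ≠ 1 := hω.pow_ne_one_of_pos_of_lt two_ne_zero (by omega)
  obtain ⟨s, hs⟩ := exists_trace_catRep_eq hσ hR (ω + ω⁻¹)
  refine ⟨s, ?_, ?_⟩
  · rw [map_pow]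
    exact pow_mem_center_of_trace_eq (by omega) (det_catRep s hσ) hω.pow_eq_one hω2 hs
  · rintro rfl
    have h4 : (ω ^ 2 - 1) * (ω ^ 2 + 1) = 0 := by
      have := hω.pow_eq_one
      linear_combination this
    have h5 := (mul_eq_zero.1 h4).resolve_left (sub_ne_zero.2 hω2)
    have h0 : ω ≠ 0 := hω.ne_zero (by norm_num)
    rw [hs]
    field_simp
    rw [h5, mul_zero]

theorem of_one_zpow_eq_of_conj (hn : 1 < n) (hσ : σ 0 R = 0) {g : FreeGroup (Fin 2)} {ε k : ℤ}
    (hε : ε = 1 ∨ ε = -1)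
    (ha : PresentedGroup.mk {R ^ n} (g * FreeGroup.of 0 * g⁻¹) =
      PresentedGroup.mk {R ^ n} (FreeGroup.of 0 * FreeGroup.of 1 ^ k))
    (hb : PresentedGroup.mk {R ^ n} (g * FreeGroup.of 1 * g⁻¹) =
      PresentedGroup.mk {R ^ n} (FreeGroup.of 1 ^ ε)) :
    PresentedGroup.mk {R ^ n} (FreeGroup.of 1) ^ ε = PresentedGroup.mk {R ^ n} (FreeGroup.of 1) ∧
      PresentedGroup.mk {R ^ n} (FreeGroup.of 1) ^ k = 1 := by
  have hak : n * σ 1 R ∣ k := by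
    have := dvd_σ_sub_of_mk_eq 1 ha
    simpa [σ_mul, σ_inv, σ_zpow, σ_pow, σ_of] using this
  have hbε : n * σ 1 R ∣ 1 - ε := by
    have := dvd_σ_sub_of_mk_eq 1 hb
    simpa [σ_mul, σ_inv, σ_zpow, σ_pow, σ_of] using this
  by_cases hR : ∃ m : ℤ, IsConj R (FreeGroup.of 1 ^ m)
  · obtain ⟨m, hm⟩ := hR
    have hσm : σ 1 R = m := by
      rw [σ_eq_of_isConj 1 hm, σ_zpow, σ_of]
      simp
    rw [hσm] at hak hbε
    have h1 : ∀ t : ℤ, n * m ∣ t → PresentedGroup.mk {R ^ n} (FreeGroup.of 1) ^ t = 1 := by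
      rintro _ ⟨t, rfl⟩
      obtain ⟨c, hc⟩ := isConj_iff.1 hm
      have : PresentedGroup.mk {R ^ n} (FreeGroup.of 1) ^ ((n : ℤ) * m) = 1 := by
        rw [mul_comm, _root_.zpow_mul, zpow_natCast, ← map_zpow, ← map_pow, ← hc, conj_pow,
          map_mul, map_mul, PresentedGroup.one_of_mem (Set.mem_singleton _), mul_one, ← map_mul,
          mul_inv_cancel, map_one]
      rw [_root_.zpow_mul, this, _root_.one_zpow]
    refine ⟨?_, h1 k hak⟩
    have := h1 _ hbε
    rw [_root_.zpow_sub, _root_.zpow_one, mul_inv_eq_one] at this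
    exact this.symm
  rcases hε with rfl | rfl
  · obtain ⟨s, hs, -⟩ := exists_catRep_pow_mem_center hn hσ hR
    obtain ⟨c, hc⟩ := exists_scalar_of_mk_eq _ hs ha
    obtain ⟨c', hc'⟩ := exists_scalar_of_mk_eq _ hs hb
    simp only [map_mul, map_inv, map_zpow, catRep_zero, catRep_one] at hc hc'
    obtain rfl := eq_zero_of_conj_catGL hc' hc
    simp
  · exfalso
    obtain rfl : n = 2 := by
      have : (n : ℤ) ∣ 2 := (dvd_mul_right _ _).trans (by simpa using hbε)
      have := Int.le_of_dvd two_pos this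
      omega
    have hm : σ 1 R = 1 ∨ σ 1 R = -1 := by
      have h2 : (2 : ℤ) * σ 1 R ∣ 2 * 1 := by simpa using hbε
      exact Int.isUnit_iff.1 (isUnit_of_dvd_one ((mul_dvd_mul_iff_left two_ne_zero).1 h2))
    obtain ⟨l, rfl⟩ : ∃ l, k = 2 * l := (dvd_mul_right _ _).trans hak
    have hσ' : σ 0 (shear (-l) R) = 0 := by rw [σ_zero_shear, hσ]
    obtain ⟨s, hs, ht⟩ := exists_catRep_pow_mem_center (R := shear (-l) R) hn hσ' (by
      rintro ⟨m, h⟩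
      refine hR ⟨m, ?_⟩
      have := (shear (- -l)).map_isConj h
      rwa [shear_neg_shear, map_zpow, shear_one] at this)
    rw [← map_pow] at hs
    have hX : PresentedGroup.mk {R ^ 2} (g * (FreeGroup.of 0 * FreeGroup.of 1 ^ l) * g⁻¹) =
        PresentedGroup.mk {R ^ 2} (FreeGroup.of 0 * FreeGroup.of 1 ^ l) := by
      have h1 : g * (FreeGroup.of 0 * FreeGroup.of 1 ^ l) * g⁻¹ =
          (g * FreeGroup.of 0 * g⁻¹) * (g * FreeGroup.of 1 * g⁻¹) ^ l := by
        rw [conj_zpow]; group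
      rw [h1, map_mul, ha, map_zpow, hb, ← map_zpow, ← map_mul]
      congr 1
      group
    obtain ⟨c, hc⟩ := exists_scalar_of_mk_eq ((catRep s).comp (shear (-l))) hs hX
    obtain ⟨c', hc'⟩ := exists_scalar_of_mk_eq ((catRep s).comp (shear (-l))) hs hb
    simp only [map_mul, map_inv, map_zpow, MonoidHom.comp_apply, shear_zero, shear_one, catRep_zero,
      catRep_one, _root_.zpow_neg, inv_mul_cancel_right] at hc hc'
    have hs1 := eq_one_or_neg_one_of_conj_catGL_inv (by simpa using hc') hc
    exact trace_catRep_ne_zero hs1 (by rwa [σ_one_shear _ hσ]) (ht rfl)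

/-- The form of the statement for elements of the one-relator group. -/
theorem eq_one_of_conj_of (hn : 1 < n) (hσ : σ 0 R = 0) {ε₀ ε₁ k : ℤ} (hε₁ : ε₁ = 1 ∨ ε₁ = -1)
    {g : PresentedGroup ({R ^ n} : Set (FreeGroup (Fin 2)))}
    (ha : g * PresentedGroup.of 0 * g⁻¹ = PresentedGroup.of 0 ^ ε₀ * PresentedGroup.of 1 ^ k)
    (hb : g * PresentedGroup.of 1 * g⁻¹ = PresentedGroup.of 1 ^ ε₁) :
    ε₀ = 1 ∧
      (PresentedGroup.of 1 : PresentedGroup ({R ^ n} : Set (FreeGroup (Fin 2)))) ^ ε₁ =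
        PresentedGroup.of 1 ∧
      (PresentedGroup.of 1 : PresentedGroup ({R ^ n} : Set (FreeGroup (Fin 2)))) ^ k = 1 := by
  obtain ⟨g, rfl⟩ := PresentedGroup.mk_surjective _ g
  have ha' : PresentedGroup.mk {R ^ n} (g * FreeGroup.of 0 * g⁻¹) =
      PresentedGroup.mk {R ^ n} (FreeGroup.of 0 ^ ε₀ * FreeGroup.of 1 ^ k) := by
    simp only [map_mul, map_inv, map_zpow]
    exact ha
  have hb' : PresentedGroup.mk {R ^ n} (g * FreeGroup.of 1 * g⁻¹) =
      PresentedGroup.mk {R ^ n} (FreeGroup.of 1 ^ ε₁) := by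
    simp only [map_mul, map_inv, map_zpow]
    exact hb
  obtain rfl : ε₀ = 1 := by
    have := dvd_σ_sub_of_mk_eq 0 ha'
    rw [σ_pow, hσ, mul_zero, zero_dvd_iff] at this
    simp [σ_mul, σ_inv, σ_zpow, σ_of] at this
    omega
  rw [_root_.zpow_one] at ha'
  exact ⟨rfl, of_one_zpow_eq_of_conj hn hσ hε₁ ha' hb'⟩

theorem zpow_zero_eq_of_conj (hσ : σ 0 R = 0) {ε₀ ε₀' k : ℤ}
    {g : PresentedGroup ({R ^ n} : Set (FreeGroup (Fin 2)))}
    (ha : g * PresentedGroup.of 0 ^ ε₀ * g⁻¹ =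
      PresentedGroup.of 0 ^ ε₀' * PresentedGroup.of 1 ^ k) :
    ε₀ = ε₀' := by
  obtain ⟨g, rfl⟩ := PresentedGroup.mk_surjective _ g
  have ha' : PresentedGroup.mk {R ^ n} (g * FreeGroup.of 0 ^ ε₀ * g⁻¹) =
      PresentedGroup.mk {R ^ n} (FreeGroup.of 0 ^ ε₀' * FreeGroup.of 1 ^ k) := by
    simp only [map_mul, map_inv, map_zpow]
    exact ha
  have := dvd_σ_sub_of_mk_eq 0 ha'
  rw [σ_pow, hσ, mul_zero, zero_dvd_iff] at this
  simp [σ_mul, σ_inv, σ_zpow, σ_of] at this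
  omega

/-- An inner automorphism relating the images of two maps of the given form is trivial. -/
theorem conj_eq_one_of_conj (hn : 1 < n) (hσ : σ 0 R = 0) {ε₀ ε₁ ε₀' ε₁' i j : ℤ}
    (hε₀ : ε₀ = 1 ∨ ε₀ = -1) (hε₁ : ε₁ = 1 ∨ ε₁ = -1) (hε₁' : ε₁' = 1 ∨ ε₁' = -1)
    {g : PresentedGroup ({R ^ n} : Set (FreeGroup (Fin 2)))}
    (ha : g * (PresentedGroup.of 0 ^ ε₀ * PresentedGroup.of 1 ^ i) * g⁻¹ =
      PresentedGroup.of 0 ^ ε₀' * PresentedGroup.of 1 ^ j)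
    (hb : g * PresentedGroup.of 1 ^ ε₁ * g⁻¹ = PresentedGroup.of 1 ^ ε₁') :
    MulAut.conj g = 1 := by
  obtain ⟨ε, hε, hb1⟩ : ∃ ε : ℤ, (ε = 1 ∨ ε = -1) ∧
      g * PresentedGroup.of 1 * g⁻¹ = PresentedGroup.of 1 ^ ε := by
    rcases hε₁ with rfl | rfl
    · exact ⟨ε₁', hε₁', by simpa using hb⟩
    · refine ⟨-ε₁', by omega, ?_⟩
      rw [_root_.zpow_neg, ← hb]
      group
  obtain ⟨k, ha1⟩ : ∃ k : ℤ,
      g * PresentedGroup.of 0 ^ ε₀ * g⁻¹ = PresentedGroup.of 0 ^ ε₀' * PresentedGroup.of 1 ^ k := by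
    refine ⟨j - ε * i, ?_⟩
    have : g * PresentedGroup.of 0 ^ ε₀ * g⁻¹ =
        (g * (PresentedGroup.of 0 ^ ε₀ * PresentedGroup.of 1 ^ i) * g⁻¹) *
          ((g * PresentedGroup.of 1 * g⁻¹) ^ i)⁻¹ := by
      rw [conj_zpow]
      group
    rw [this, ha, hb1, ← _root_.zpow_mul, mul_assoc, _root_.zpow_sub]
  obtain rfl := zpow_zero_eq_of_conj hσ ha1
  suffices h : g * PresentedGroup.of 0 * g⁻¹ = PresentedGroup.of 0 ∧
      g * PresentedGroup.of 1 * g⁻¹ = PresentedGroup.of 1 by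
    ext x
    have : (MulAut.conj g).toMonoidHom = MonoidHom.id _ := by
      apply PresentedGroup.ext
      intro x
      fin_cases x
      · simpa using h.1
      · simpa using h.2
    exact DFunLike.congr_fun this x
  rcases hε₀ with rfl | rfl
  · rw [_root_.zpow_one] at ha1
    obtain ⟨-, h1, h2⟩ := eq_one_of_conj_of (ε₀ := 1) hn hσ hε (by simpa using ha1) hb1
    rw [ha1, hb1, h1, h2, mul_one]
    exact ⟨rfl, rfl⟩
  · have ha2 : g * PresentedGroup.of 0 * g⁻¹ =
        (PresentedGroup.of 1 ^ k)⁻¹ * PresentedGroup.of 0 := by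
      have := congrArg Inv.inv ha1
      simpa [mul_assoc] using this
    obtain ⟨-, h1, h2⟩ := eq_one_of_conj_of (ε₀ := 1) (k := -k) (g := PresentedGroup.of 1 ^ k * g)
      hn hσ hε (by
        have : PresentedGroup.of 1 ^ k * g * PresentedGroup.of 0 * (PresentedGroup.of 1 ^ k * g)⁻¹ =
            PresentedGroup.of 1 ^ k * (g * PresentedGroup.of 0 * g⁻¹) *
              (PresentedGroup.of 1 ^ k)⁻¹ := by group
        rw [this, ha2]
        group) (by
        have : PresentedGroup.of 1 ^ k * g * PresentedGroup.of 1 * (PresentedGroup.of 1 ^ k * g)⁻¹ =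
            PresentedGroup.of 1 ^ k * (g * PresentedGroup.of 1 * g⁻¹) *
              (PresentedGroup.of 1 ^ k)⁻¹ := by group
        rw [this, hb1]
        group)
    rw [_root_.zpow_neg] at h2
    rw [ha2, hb1, h1, h2, one_mul]
    exact ⟨rfl, rfl⟩

end Main

end

theorem statement_9 (R : FreeGroup (Fin 2)) (n : ℕ) (hn : 1 < n) (hσ : σ 0 R = 0) :
    (∀ (ε₀ ε₁ k : ℤ), (ε₀ = 1 ∨ ε₀ = -1) → (ε₁ = 1 ∨ ε₁ = -1) →
      (∃ g : PresentedGroup ({R ^ n} : Set (FreeGroup (Fin 2))),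
        g * PresentedGroup.of 0 * g⁻¹ =
          (PresentedGroup.of (0 : Fin 2) : PresentedGroup ({R ^ n} : Set (FreeGroup (Fin 2)))) ^ ε₀ *
            PresentedGroup.of (1 : Fin 2) ^ k ∧
        g * PresentedGroup.of 1 * g⁻¹ =
          (PresentedGroup.of (1 : Fin 2) : PresentedGroup ({R ^ n} : Set (FreeGroup (Fin 2)))) ^ ε₁) →
      ε₀ = 1 ∧
        (PresentedGroup.of (1 : Fin 2) : PresentedGroup ({R ^ n} : Set (FreeGroup (Fin 2)))) ^ ε₁ =
          PresentedGroup.of (1 : Fin 2) ∧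
        (PresentedGroup.of (1 : Fin 2) : PresentedGroup ({R ^ n} : Set (FreeGroup (Fin 2)))) ^ k = 1) ∧
    (∀ (φ₁ φ₂ : MulAut (PresentedGroup ({R ^ n} : Set (FreeGroup (Fin 2)))))
        (ε₀ ε₁ ε₀' ε₁' i j : ℤ),
      (ε₀ = 1 ∨ ε₀ = -1) → (ε₁ = 1 ∨ ε₁ = -1) → (ε₀' = 1 ∨ ε₀' = -1) → (ε₁' = 1 ∨ ε₁' = -1) →
      φ₁ (PresentedGroup.of 0) = PresentedGroup.of (0 : Fin 2) ^ ε₀ * PresentedGroup.of (1 : Fin 2) ^ i →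
      φ₁ (PresentedGroup.of 1) = PresentedGroup.of (1 : Fin 2) ^ ε₁ →
      φ₂ (PresentedGroup.of 0) = PresentedGroup.of (0 : Fin 2) ^ ε₀' * PresentedGroup.of (1 : Fin 2) ^ j →
      φ₂ (PresentedGroup.of 1) = PresentedGroup.of (1 : Fin 2) ^ ε₁' →
      φ₁ ≠ φ₂ →
      (QuotientGroup.mk φ₁ : Out (PresentedGroup ({R ^ n} : Set (FreeGroup (Fin 2))))) ≠
        QuotientGroup.mk φ₂) := by
  refine ⟨?_, ?_⟩
  · rintro ε₀ ε₁ k - hε₁ ⟨g, ha, hb⟩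
    exact eq_one_of_conj_of hn hσ hε₁ ha hb
  · intro φ₁ φ₂ ε₀ ε₁ ε₀' ε₁' i j hε₀ hε₁ _ hε₁' ha₁ hb₁ ha₂ hb₂ hne hmk
    have hmem : φ₂ * φ₁⁻¹ ∈ innAut _ :=
      (innAut_normal _).mem_comm (QuotientGroup.eq.1 hmk)
    obtain ⟨g, hg⟩ := hmem
    have hφ : φ₂ = MulAut.conj g * φ₁ := by rw [hg, inv_mul_cancel_right]
    rw [hφ, MulAut.mul_apply, MulAut.conj_apply] at ha₂ hb₂
    rw [ha₁] at ha₂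
    rw [hb₁] at hb₂
    rw [conj_eq_one_of_conj hn hσ hε₀ hε₁ hε₁' ha₂ hb₂, one_mul] at hφ
    exact hne hφ.symm
end

section
/- Let G = ⟨a, b; bⁿ⟩ with n > 1 (the free product ℤ * Cₙ). Then Out(G) is isomorphic to the semidirect product Dₙ ⋊ Aut(Cₙ), where Aut(Cₙ) commutes with the reflection generator of Dₙ and acts on the rotation subgroup ⟨rotation⟩ ≅ Cₙ as automorphisms in the natural way. In particular |Out(G)| = 2n·φ(n), where φ is Euler's totient function. -/
namespace Monoid.CoprodI

variable {ι : Type*} {G : ι → Type*} [∀ i, Group (G i)]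

theorem NeWord.toList_eq_of_prod_eq {i j k l : ι} {w : NeWord G i j} {v : NeWord G k l}
    (h : w.prod = v.prod) : w.toList = v.toList := by
  classical
  have : w.toWord = v.toWord := Word.equiv.symm.injective h
  exact congrArg Word.toList this

theorem NeWord.prod_ne_one {i j : ι} (w : NeWord G i j) : w.prod ≠ 1 := by
  classical
  intro h
  have : w.toWord = Word.empty := Word.equiv.symm.injective (h.trans Word.prod_empty.symm)
  exact w.toList_ne_nil (congrArg Word.toList this)

/-- `HasEnds i j g` says that `g` is the product of a nonempty reduced word whose first letter
lies in `G i` and whose last letter lies in `G j`. -/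
def HasEnds (i j : ι) (g : CoprodI G) : Prop := ∃ w : NeWord G i j, w.prod = g

theorem hasEnds_of {i : ι} {x : G i} (hx : x ≠ 1) : HasEnds i i (of x) :=
  ⟨.singleton x hx, by simp⟩

theorem HasEnds.mul {i j k l : ι} {g h : CoprodI G} (hg : HasEnds i j g) (hjk : j ≠ k)
    (hh : HasEnds k l h) : HasEnds i l (g * h) := by
  obtain ⟨w, rfl⟩ := hg
  obtain ⟨v, rfl⟩ := hh
  exact ⟨.append w hjk v, by simp⟩

theorem HasEnds.inv {i j : ι} {g : CoprodI G} (hg : HasEnds i j g) : HasEnds j i g⁻¹ := by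
  obtain ⟨w, rfl⟩ := hg
  exact ⟨w.inv, by simp⟩

theorem HasEnds.ne_one {i j : ι} {g : CoprodI G} (hg : HasEnds i j g) : g ≠ 1 := by
  obtain ⟨w, rfl⟩ := hg
  exact w.prod_ne_one

theorem exists_hasEnds {g : CoprodI G} (hg : g ≠ 1) : ∃ i j, HasEnds i j g := by
  classical
  obtain ⟨i, j, w, hw⟩ := NeWord.of_word (Word.equiv g) (fun h => hg (by
    rw [← Word.equiv.symm_apply_apply g, h]; exact Word.prod_empty))
  refine ⟨i, j, w, ?_⟩
  rw [← Word.equiv.symm_apply_apply g, ← hw]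
  rfl

theorem NeWord.eq_of_or_exists_head {i j : ι} (w : NeWord G i j) :
    (i = j ∧ ∃ x : G i, x ≠ 1 ∧ w.prod = of x) ∨
      ∃ (k : ι) (x : G i) (u : NeWord G k j), x ≠ 1 ∧ i ≠ k ∧ w.prod = of x * u.prod ∧
        u.toList.length < w.toList.length := by
  induction w with
  | singleton x hx => exact .inl ⟨rfl, x, hx, by simp⟩
  | @append i j k l w₁ hne w₂ ih₁ _ =>
    right
    rcases ih₁ with ⟨rfl, x, hx, h⟩ | ⟨m, x, u, hx, hm, h, hlt⟩
    · refine ⟨k, x, w₂, hx, hne, by simp [h], ?_⟩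
      have := List.length_pos_iff.2 w₁.toList_ne_nil
      simpa using this
    · exact ⟨m, x, .append u hne w₂, hx, hm, by simp [h, mul_assoc], by simpa using hlt⟩

theorem NeWord.eq_of_or_exists_last {i j : ι} (w : NeWord G i j) :
    (i = j ∧ ∃ x : G j, x ≠ 1 ∧ w.prod = of x) ∨
      ∃ (k : ι) (x : G j) (u : NeWord G i k), x ≠ 1 ∧ k ≠ j ∧ w.prod = u.prod * of x ∧
        u.toList.length < w.toList.length := by
  induction w with
  | singleton x hx => exact .inl ⟨rfl, x, hx, by simp⟩
  | @append i j k l w₁ hne w₂ _ ih₂ =>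
    right
    rcases ih₂ with ⟨rfl, x, hx, h⟩ | ⟨m, x, u, hx, hm, h, hlt⟩
    · refine ⟨j, x, w₁, hx, hne, by simp [h], ?_⟩
      have := List.length_pos_iff.2 w₂.toList_ne_nil
      simpa using this
    · exact ⟨m, x, .append w₁ hne u, hx, hm, by simp [h, mul_assoc], by simpa using hlt⟩

theorem HasEnds.pow_of_ne {i j : ι} {g : CoprodI G} (hg : HasEnds i j g) (hij : i ≠ j) (m : ℕ) :
    HasEnds i j (g ^ (m + 1)) := by
  induction m with
  | zero => simpa using hg
  | succ m ih => rw [pow_succ]; exact ih.mul hij.symm hg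

theorem of_mul_pow_mul_of_inv {i : ι} (x : G i) (u : CoprodI G) (m : ℕ) :
    (of x * u * of x⁻¹) ^ m = of x * u ^ m * of x⁻¹ := by
  rw [map_inv, conj_pow]

/-- A reduced word whose first and last letters lie in the same factor `G i` has powers of the same
kind, unless they are trivial; and if it is torsion, it is conjugate into a factor. -/
theorem NeWord.pow_hasEnds_and_conj {i j : ι} (w : NeWord G i j) (hij : i = j) :
    (∀ m : ℕ, w.prod ^ m = 1 ∨ HasEnds i i (w.prod ^ m)) ∧
      ((∃ (h : CoprodI G) (k : ι) (x : G k), w.prod = h * of x * h⁻¹) ∨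
        ∀ m : ℕ, w.prod ^ (m + 1) ≠ 1) := by
  induction hl : w.toList.length using Nat.strong_induction_on generalizing i j with
  | _ N ih =>
  subst hij
  rcases w.eq_of_or_exists_head with ⟨-, x, hx, h⟩ | ⟨j, x, v, hx, hij, h, hlt⟩
  · refine ⟨fun m => ?_, .inl ⟨1, i, x, by simp [h]⟩⟩
    by_cases hm : x ^ m = 1
    · left; rw [h, ← map_pow, hm, map_one]
    · right; rw [h, ← map_pow]; exact hasEnds_of hm
  rcases v.eq_of_or_exists_last with ⟨h', -⟩ | ⟨k, y, u, hy, hki, h', hlt'⟩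
  · exact absurd h'.symm hij
  have hw : w.prod = of x * u.prod * of y := by rw [h, h', mul_assoc]
  have hu : HasEnds j k u.prod := ⟨u, rfl⟩
  by_cases hyx : y * x = 1
  · obtain rfl : y = x⁻¹ := eq_inv_of_mul_eq_one_left hyx
    rw [hw]
    have hconj : ∀ m : ℕ, HasEnds j k (u.prod ^ m) →
        HasEnds i i ((of x * u.prod * of x⁻¹) ^ m) := fun m hm => by
      rw [of_mul_pow_mul_of_inv]
      exact ((hasEnds_of hx).mul hij hm).mul hki (hasEnds_of hy)
    by_cases hjk : j = k
    · subst hjk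
      obtain ⟨ih₁, ih₂⟩ := ih _ (by omega) u rfl rfl
      constructor
      · intro m
        rcases ih₁ m with h1 | h1
        · left; rw [of_mul_pow_mul_of_inv, h1]; simp
        · exact .inr (hconj m h1)
      · rcases ih₂ with ⟨g, l, z, hz⟩ | h1
        · exact .inl ⟨of x * g, l, z, by rw [hz, map_inv, mul_inv_rev]; simp only [mul_assoc]⟩
        · exact .inr fun m => (hconj _ ((ih₁ (m + 1)).resolve_left (h1 m))).ne_one
    · have key : ∀ m : ℕ, HasEnds i i ((of x * u.prod * of x⁻¹) ^ (m + 1)) :=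
        fun m => hconj _ (hu.pow_of_ne hjk m)
      refine ⟨fun m => ?_, .inr fun m => (key m).ne_one⟩
      cases m with
      | zero => simp
      | succ m => exact .inr (key m)
  · have hxu : HasEnds i k (of x * u.prod) := (hasEnds_of hx).mul hij hu
    have key' : ∀ m : ℕ, HasEnds i k (w.prod ^ m * (of x * u.prod)) := by
      intro m
      induction m with
      | zero => simpa using hxu
      | succ m ihm =>
        have : w.prod ^ (m + 1) * (of x * u.prod) =
            w.prod ^ m * (of x * u.prod) * of (y * x) * u.prod := by
          rw [pow_succ, map_mul]
          nth_rewrite 2 [hw]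
          simp only [mul_assoc]
        rw [this]
        exact (ihm.mul hki (hasEnds_of hyx)).mul hij hu
    have key : ∀ m : ℕ, HasEnds i i (w.prod ^ (m + 1)) := by
      intro m
      have : w.prod ^ (m + 1) = w.prod ^ m * (of x * u.prod) * of y := by
        rw [pow_succ]
        nth_rewrite 2 [hw]
        simp only [mul_assoc]
      rw [this]
      exact (key' m).mul hki (hasEnds_of hy)
    refine ⟨fun m => ?_, .inr fun m => (key m).ne_one⟩
    cases m with
    | zero => simp
    | succ m => exact .inr (key m)

theorem HasEnds.zpow {i : ι} {g : CoprodI G} (hg : HasEnds i i g) (m : ℤ) (hm : g ^ m ≠ 1) :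
    HasEnds i i (g ^ m) := by
  obtain ⟨w, rfl⟩ := hg
  obtain ⟨m, rfl | rfl⟩ := m.eq_nat_or_neg
  · rw [zpow_natCast] at hm ⊢
    exact ((w.pow_hasEnds_and_conj rfl).1 m).resolve_left hm
  · rw [zpow_neg, zpow_natCast] at hm ⊢
    exact (((w.pow_hasEnds_and_conj rfl).1 m).resolve_left (by simpa using hm)).inv

/-- A torsion element of a free product is conjugate to an element of a factor. -/
theorem exists_conj_of_pow_eq_one [Nonempty ι] {g : CoprodI G} {m : ℕ} (hm : m ≠ 0)
    (hg : g ^ m = 1) : ∃ (h : CoprodI G) (k : ι) (x : G k), g = h * of x * h⁻¹ := by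
  by_cases h1 : g = 1
  · exact ⟨1, Classical.arbitrary ι, 1, by simp [h1]⟩
  obtain ⟨m, rfl⟩ := Nat.exists_eq_succ_of_ne_zero hm
  obtain ⟨i, j, hij⟩ := exists_hasEnds h1
  by_cases h : i = j
  · subst h
    obtain ⟨w, rfl⟩ := hij
    exact (w.pow_hasEnds_and_conj rfl).2.resolve_right fun h => h m hg
  · exact absurd hg (hij.pow_of_ne h m).ne_one

theorem NeWord.exists_lift_prod {θ : ∀ i, G i →* CoprodI G}
    (hθ : ∀ i (x : G i), x ≠ 1 → HasEnds i i (θ i x)) {i j : ι} (w : NeWord G i j) :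
    ∃ v : NeWord G i j, v.prod = lift θ w.prod ∧ w.toList.length ≤ v.toList.length := by
  induction w with
  | @singleton i x hx =>
    obtain ⟨v, hv⟩ := hθ i x hx
    exact ⟨v, by simp [hv], Nat.succ_le_of_lt (List.length_pos_iff.2 v.toList_ne_nil)⟩
  | append w₁ hne w₂ ih₁ ih₂ =>
    obtain ⟨v₁, h₁, l₁⟩ := ih₁
    obtain ⟨v₂, h₂, l₂⟩ := ih₂
    exact ⟨.append v₁ hne v₂, by simp [h₁, h₂], by simpa using Nat.add_le_add l₁ l₂⟩

/-- If `lift θ g` is a single letter, where every `θ i` maps nontrivial elements to reduced words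
with both ends in `G i`, then `g` is a single letter. -/
theorem eq_of_lift_eq_of {θ : ∀ i, G i →* CoprodI G}
    (hθ : ∀ i (x : G i), x ≠ 1 → HasEnds i i (θ i x)) {g : CoprodI G} {i : ι} {x : G i}
    (hx : x ≠ 1) (hg : lift θ g = of x) : ∃ y : G i, g = of y := by
  have hg1 : g ≠ 1 := by
    rintro rfl
    exact (hasEnds_of hx).ne_one (by rw [← hg, map_one])
  obtain ⟨j, k, w, rfl⟩ := exists_hasEnds hg1
  obtain ⟨v, hv, hl⟩ := w.exists_lift_prod hθ
  have hlist : v.toList = [⟨i, x⟩] :=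
    NeWord.toList_eq_of_prod_eq (v := .singleton x hx) (by rw [hv, hg]; simp)
  have hij : j = i := by
    have := v.toList_head?
    rw [hlist] at this
    simp only [List.head?_cons, Option.some.injEq] at this
    exact (congrArg Sigma.fst this).symm
  subst hij
  rcases w.eq_of_or_exists_head with ⟨-, y, -, h⟩ | ⟨k, y, u, -, -, -, hlt⟩
  · exact ⟨y, h⟩
  · have := List.length_pos_iff.2 u.toList_ne_nil
    rw [hlist] at hl
    simp only [List.length_singleton] at hl
    omega

section TwoFactors

variable {G : Fin 2 → Type*} [∀ i, Group (G i)]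

theorem exists_strip (g : CoprodI G) :
    ∃ (p q : G 1) (t : CoprodI G), g = of p * t * of q ∧ (t = 1 ∨ HasEnds 0 0 t) := by
  have left : ∃ (p : G 1) (t : CoprodI G), g = of p * t ∧ (t = 1 ∨ ∃ j, HasEnds 0 j t) := by
    by_cases hg : g = 1
    · exact ⟨1, 1, by simp [hg], .inl rfl⟩
    obtain ⟨i, j, h⟩ := exists_hasEnds hg
    by_cases hi : i = 0
    · subst hi
      exact ⟨1, g, by simp, .inr ⟨j, h⟩⟩
    obtain rfl := Fin.eq_one_of_ne_zero i hi
    obtain ⟨w, rfl⟩ := h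
    rcases w.eq_of_or_exists_head with ⟨-, x, -, h⟩ | ⟨k, x, u, -, hk, h, -⟩
    · exact ⟨x, 1, by simp [h], .inl rfl⟩
    · obtain rfl : k = 0 := by omega
      exact ⟨x, u.prod, h, .inr ⟨j, u, rfl⟩⟩
  obtain ⟨p, t, rfl, rfl | ⟨j, h⟩⟩ := left
  · exact ⟨p, 1, 1, by simp, .inl rfl⟩
  by_cases hj : j = 0
  · subst hj
    exact ⟨p, 1, t, by simp, .inr h⟩
  obtain rfl := Fin.eq_one_of_ne_zero j hj
  obtain ⟨w, rfl⟩ := h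
  rcases w.eq_of_or_exists_last with ⟨h, -⟩ | ⟨k, x, u, -, hk, h, -⟩
  · exact absurd h (by decide)
  · obtain rfl : k = 0 := by omega
    exact ⟨p, x, u.prod, by rw [h, mul_assoc], .inr ⟨u, rfl⟩⟩

/-- If `G 0` is infinite cyclic with generator `a`, then every element which generates the free
product together with `G 1` lies in the double coset `(G 1) a (G 1)` or `(G 1) a⁻¹ (G 1)`. -/
theorem eq_of_mul_zpow_mul_of_of_closure_eq_top (e : CoprodI G →* Multiplicative ℤ) (a : G 0)
    (ha : ∀ x : G 0, x = a ^ (Multiplicative.toAdd (e (of x))))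
    (hea : e (of a) = Multiplicative.ofAdd 1) (heb : ∀ y : G 1, e (of y) = 1)
    (w : CoprodI G) (hw : Subgroup.closure (insert w (Set.range (of : G 1 →* CoprodI G))) = ⊤) :
    ∃ (p q : G 1) (s : ℤ), (s = 1 ∨ s = -1) ∧ w = of p * of a ^ s * of q := by
  obtain ⟨p, q, t, rfl, ht⟩ := exists_strip w
  let θ : ∀ i, G i →* CoprodI G := fun i =>
    if i = 0 then (zpowersHom _ t).comp (e.comp of) else of
  have hθ0 : ∀ x, θ 0 x = t ^ (Multiplicative.toAdd (e (of x))) := fun x => by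
    simp [θ]
  have hθ1 : ∀ y, θ 1 y = of y := fun y => by simp [θ]
  have hsurj : (lift θ).range = ⊤ := by
    rw [← top_le_iff, ← hw, Subgroup.closure_le]
    have h1 : ∀ y : G 1, of y ∈ (lift θ).range := fun y => ⟨of y, by rw [lift_of, hθ1]⟩
    rintro _ (rfl | ⟨y, rfl⟩)
    · refine mul_mem (mul_mem (h1 p) ⟨of a, ?_⟩) (h1 q)
      rw [lift_of, hθ0, hea]
      simp
    · exact h1 y
  have he : ∀ g, e (lift θ g) = e t ^ (Multiplicative.toAdd (e g)) := by
    have : e.comp (lift θ) = (zpowersHom _ (e t)).comp e := by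
      ext i x : 2
      fin_cases i
      · simp [hθ0]
      · simp [hθ1, heb]
    exact fun g => DFunLike.congr_fun this g
  obtain ⟨g, hg⟩ : of a ∈ (lift θ).range := hsurj ▸ Subgroup.mem_top _
  have hs : Multiplicative.toAdd (e g) * Multiplicative.toAdd (e t) = 1 := by
    have := congrArg Multiplicative.toAdd (he g)
    rw [hg, hea] at this
    simpa using this.symm
  have het : Multiplicative.toAdd (e t) ≠ 0 := right_ne_zero_of_mul_eq_one hs
  have ht0 : HasEnds 0 0 t := ht.resolve_left (by rintro rfl; simp at het)
  have hpow : ∀ m : ℤ, m ≠ 0 → t ^ m ≠ 1 := fun m hm h => by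
    have := congrArg (fun z => Multiplicative.toAdd (e z)) h
    simp [hm, het] at this
  have hθ : ∀ i (x : G i), x ≠ 1 → HasEnds i i (θ i x) := by
    intro i x hx
    by_cases hi : i = 0
    · subst hi
      rw [hθ0]
      refine ht0.zpow _ (hpow _ fun h => hx ?_)
      rw [ha x, h, zpow_zero]
    · obtain rfl := Fin.eq_one_of_ne_zero i hi
      rw [hθ1]
      exact hasEnds_of hx
  have ha1 : a ≠ 1 := by
    rintro rfl
    simp [← ofAdd_zero] at hea
  obtain ⟨y, rfl⟩ := eq_of_lift_eq_of hθ ha1 hg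
  rw [lift_of, hθ0] at hg
  rcases Int.isUnit_iff.1 (IsUnit.of_mul_eq_one _ hs) with h | h
  · exact ⟨p, q, 1, .inl rfl, by rw [← hg, h]; simp⟩
  · exact ⟨p, q, -1, .inr rfl, by rw [← hg, h]; simp⟩

end TwoFactors

end Monoid.CoprodI

/-- The homomorphism from the cyclic group of order `n` determined by an element `y` with
`y ^ n = 1`. -/
def zmodPowersHom {K : Type*} [Group K] (n : ℕ) (y : K) (hy : y ^ n = 1) :
    Multiplicative (ZMod n) →* K :=
  AddMonoidHom.toMultiplicativeLeft (ZMod.lift n ⟨zmultiplesHom (Additive K) (Additive.ofMul y), by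
    simp [← ofMul_pow, hy]⟩)

@[simp]
theorem zmodPowersHom_ofAdd_intCast {K : Type*} [Group K] (n : ℕ) (y : K) (hy : y ^ n = 1)
    (z : ℤ) : zmodPowersHom n y hy (Multiplicative.ofAdd (z : ZMod n)) = y ^ z := by
  simp [zmodPowersHom]

@[simp]
theorem zmodPowersHom_ofAdd_one {K : Type*} [Group K] (n : ℕ) (y : K) (hy : y ^ n = 1) :
    zmodPowersHom n y hy (Multiplicative.ofAdd 1) = y := by
  simpa using zmodPowersHom_ofAdd_intCast n y hy 1

theorem ZMod.exists_eq_ofAdd_one_zpow (n : ℕ) (x : Multiplicative (ZMod n)) :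
    ∃ z : ℤ, x = Multiplicative.ofAdd (1 : ZMod n) ^ z := by
  obtain ⟨z, hz⟩ := ZMod.intCast_surjective (Multiplicative.toAdd x)
  exact ⟨z, by rw [← ofAdd_zsmul]; simp [hz]⟩

theorem ZMod.ofAdd_one_pow_self (n : ℕ) : Multiplicative.ofAdd (1 : ZMod n) ^ n = 1 := by
  rw [← ofAdd_nsmul]; simp

theorem ZMod.monoidHom_ext {K : Type*} [Group K] {n : ℕ} {f g : Multiplicative (ZMod n) →* K}
    (h : f (Multiplicative.ofAdd 1) = g (Multiplicative.ofAdd 1)) : f = g := by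
  refine MonoidHom.ext fun x => ?_
  obtain ⟨z, rfl⟩ := ZMod.exists_eq_ofAdd_one_zpow n x
  rw [map_zpow, map_zpow, h]

/-- The free product of an infinite cyclic group and a cyclic group of order `n`. -/
abbrev IntStarCyclic (n : ℕ) : Type :=
  PresentedGroup ({FreeGroup.of (1 : Fin 2) ^ n} : Set (FreeGroup (Fin 2)))

namespace IntStarCyclic

open Multiplicative

/-- The generator of infinite order. -/
def a (n : ℕ) : IntStarCyclic n := PresentedGroup.of 0

/-- The generator of order `n`. -/
def b (n : ℕ) : IntStarCyclic n := PresentedGroup.of 1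

variable {n : ℕ}

theorem b_pow : b n ^ n = 1 := by
  have : PresentedGroup.mk ({FreeGroup.of (1 : Fin 2) ^ n} : Set (FreeGroup (Fin 2)))
      (FreeGroup.of 1 ^ n) = 1 :=
    PresentedGroup.one_of_mem rfl
  rwa [map_pow] at this

section Hom

variable {K : Type*} [Group K]

/-- The universal property of the free product. -/
def hom (x y : K) (hy : y ^ n = 1) : IntStarCyclic n →* K :=
  PresentedGroup.toGroup (f := ![x, y]) (by simpa using hy)

@[simp]
theorem hom_a (x y : K) (hy : y ^ n = 1) : hom x y hy (a n) = x :=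
  PresentedGroup.toGroup.of _

@[simp]
theorem hom_b (x y : K) (hy : y ^ n = 1) : hom x y hy (b n) = y :=
  PresentedGroup.toGroup.of _

theorem hom_ext {f g : IntStarCyclic n →* K} (ha : f (a n) = g (a n)) (hb : f (b n) = g (b n)) :
    f = g := by
  refine PresentedGroup.ext fun i => ?_
  fin_cases i
  · exact ha
  · exact hb

end Hom

theorem closure_a_b : Subgroup.closure {a n, b n} = ⊤ := by
  rw [← PresentedGroup.closure_range_of]
  congr 1
  ext g
  simp [a, b, eq_comm]

/-- The exponent sum of the generator of infinite order. -/
def expA : IntStarCyclic n →* Multiplicative ℤ := hom (ofAdd 1) 1 (one_pow n)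

/-- The exponent sum of the generator of order `n`. -/
def expB : IntStarCyclic n →* Multiplicative (ZMod n) :=
  hom 1 (ofAdd 1) (ZMod.ofAdd_one_pow_self n)

@[simp] theorem expA_a : expA (a n) = ofAdd 1 := hom_a ..
@[simp] theorem expA_b : expA (b n) = 1 := hom_b ..
@[simp] theorem expB_a : expB (a n) = 1 := hom_a ..
@[simp] theorem expB_b : expB (b n) = ofAdd 1 := hom_b ..

/-- The factors of the free product. -/
abbrev Factor (n : ℕ) (i : Fin 2) : Type := Multiplicative (ZMod (![0, n] i))

open Monoid (CoprodI)

/-- The canonical map to the free product of cyclic groups. -/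
def toCoprodI (n : ℕ) : IntStarCyclic n →* CoprodI (Factor n) :=
  hom (CoprodI.of (i := (0 : Fin 2)) (ofAdd (1 : ZMod (![0, n] 0))))
    (CoprodI.of (i := (1 : Fin 2)) (ofAdd (1 : ZMod (![0, n] 1))))
    (by rw [← map_pow]; exact (congrArg _ (ZMod.ofAdd_one_pow_self n)).trans (map_one _))

theorem toCoprodI_a : toCoprodI n (a n) =
    CoprodI.of (i := (0 : Fin 2)) (ofAdd (1 : ZMod (![0, n] 0))) :=
  hom_a _ _ _

theorem toCoprodI_b : toCoprodI n (b n) =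
    CoprodI.of (i := (1 : Fin 2)) (ofAdd (1 : ZMod (![0, n] 1))) :=
  hom_b _ _ _

/-- The isomorphism with the free product of cyclic groups. -/
def equivCoprodI (n : ℕ) : IntStarCyclic n ≃* CoprodI (Factor n) :=
  MonoidHom.toMulEquiv (toCoprodI n)
    (CoprodI.lift fun i => zmodPowersHom (![0, n] i) (PresentedGroup.of i) (by
      fin_cases i
      · simp
      · exact b_pow))
    (by
      apply hom_ext
      · simp only [MonoidHom.comp_apply, toCoprodI_a, CoprodI.lift_of, zmodPowersHom_ofAdd_one]
        rfl
      · simp only [MonoidHom.comp_apply, toCoprodI_b, CoprodI.lift_of, zmodPowersHom_ofAdd_one]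
        rfl)
    (by
      refine CoprodI.ext_hom _ _ fun i => ZMod.monoidHom_ext ?_
      simp only [MonoidHom.comp_apply, CoprodI.lift_of, zmodPowersHom_ofAdd_one,
        MonoidHom.id_apply]
      fin_cases i
      · exact toCoprodI_a
      · exact toCoprodI_b)

@[simp]
theorem equivCoprodI_a : equivCoprodI n (a n) =
    CoprodI.of (i := (0 : Fin 2)) (ofAdd (1 : ZMod (![0, n] 0))) :=
  toCoprodI_a (n := n)

@[simp]
theorem equivCoprodI_b : equivCoprodI n (b n) =
    CoprodI.of (i := (1 : Fin 2)) (ofAdd (1 : ZMod (![0, n] 1))) :=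
  toCoprodI_b (n := n)

theorem exists_of_zero_eq (x : Factor n 0) :
    ∃ z : ℤ, x = ofAdd (1 : ZMod (![0, n] 0)) ^ z ∧
      CoprodI.of x = equivCoprodI n (a n ^ z) := by
  obtain ⟨z, rfl⟩ := ZMod.exists_eq_ofAdd_one_zpow _ x
  exact ⟨z, rfl, by
    rw [map_zpow (equivCoprodI n), equivCoprodI_a]; exact map_zpow _ _ _⟩

theorem exists_of_one_eq (x : Factor n 1) :
    ∃ z : ℤ, CoprodI.of x = equivCoprodI n (b n ^ z) := by
  obtain ⟨z, rfl⟩ := ZMod.exists_eq_ofAdd_one_zpow _ x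
  exact ⟨z, by
    rw [map_zpow (equivCoprodI n), equivCoprodI_b]; exact map_zpow _ _ _⟩

theorem exists_conj_zpow_b_of_pow_eq_one {g : IntStarCyclic n} {m : ℕ} (hm : m ≠ 0)
    (hg : g ^ m = 1) : ∃ (h : IntStarCyclic n) (z : ℤ), g = h * b n ^ z * h⁻¹ := by
  obtain ⟨h, k, x, hx⟩ := CoprodI.exists_conj_of_pow_eq_one (g := equivCoprodI n g) hm
    (by rw [← map_pow, hg, map_one])
  obtain ⟨h, rfl⟩ := (equivCoprodI n).surjective h
  by_cases hk : k = 0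
  · subst hk
    obtain ⟨z, -, hz⟩ := exists_of_zero_eq x
    rw [hz, ← map_inv, ← map_mul, ← map_mul] at hx
    obtain rfl := (equivCoprodI n).injective hx
    have := congrArg (fun t => toAdd (expA t)) hg
    obtain rfl : z = 0 := by simpa [hm] using this
    exact ⟨h, 0, by simp⟩
  · obtain rfl := Fin.eq_one_of_ne_zero k hk
    obtain ⟨z, hz⟩ := exists_of_one_eq x
    rw [hz, ← map_inv, ← map_mul, ← map_mul] at hx
    exact ⟨h, z, (equivCoprodI n).injective hx⟩

theorem eq_of_closure_eq_top {w : IntStarCyclic n} (hw : Subgroup.closure {w, b n} = ⊤) :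
    ∃ p q s : ℤ, (s = 1 ∨ s = -1) ∧ w = b n ^ p * a n ^ s * b n ^ q := by
  obtain ⟨p, q, s, hs, h⟩ := CoprodI.eq_of_mul_zpow_mul_of_of_closure_eq_top
    (expA.comp (equivCoprodI n).symm.toMonoidHom) (ofAdd (1 : ZMod (![0, n] 0)))
    (fun x => by
      obtain ⟨z, hz, hz'⟩ := exists_of_zero_eq x
      have : toAdd (expA ((equivCoprodI n).symm (CoprodI.of x))) = z := by
        rw [hz', MulEquiv.symm_apply_apply]; simp
      exact hz.trans (congrArg _ this.symm))
    (by
      have : expA ((equivCoprodI n).symm (equivCoprodI n (a n))) = ofAdd 1 := by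
        rw [MulEquiv.symm_apply_apply, expA_a]
      rwa [equivCoprodI_a] at this)
    (fun y => by
      obtain ⟨z, hz⟩ := exists_of_one_eq y
      have : expA ((equivCoprodI n).symm (CoprodI.of y)) = 1 := by
        rw [hz, MulEquiv.symm_apply_apply, map_zpow, expA_b, one_zpow]
      exact this)
    (equivCoprodI n w) (by
      rw [← top_le_iff, ← Subgroup.map_top_of_surjective (equivCoprodI n).toMonoidHom
        (equivCoprodI n).surjective, ← hw, MonoidHom.map_closure]
      refine Subgroup.closure_mono ?_
      rintro _ ⟨g, rfl | rfl, rfl⟩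
      · exact .inl rfl
      · exact .inr ⟨_, equivCoprodI_b.symm⟩)
  obtain ⟨z, hz⟩ := exists_of_one_eq p
  obtain ⟨z', hz'⟩ := exists_of_one_eq q
  refine ⟨z, z', s, hs, (equivCoprodI n).injective ?_⟩
  rw [h, hz, hz', ← equivCoprodI_a]
  simp

theorem zpow_b_pow (z : ℤ) : (b n ^ z) ^ n = 1 := by
  rw [← zpow_natCast, zpow_comm, zpow_natCast, b_pow, one_zpow]

/-- The automorphism `a ↦ a * b ^ z`, `b ↦ b`. -/
def translation (z : ℤ) : MulAut (IntStarCyclic n) :=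
  MonoidHom.toMulEquiv (hom (a n * b n ^ z) (b n) b_pow) (hom (a n * b n ^ (-z)) (b n) b_pow)
    (hom_ext (by simp) (by simp)) (hom_ext (by simp) (by simp))

@[simp]
theorem translation_a (z : ℤ) : translation z (a n) = a n * b n ^ z := by simp [translation]

@[simp]
theorem translation_b (z : ℤ) : translation z (b n) = b n := by simp [translation]

/-- The automorphism `a ↦ a⁻¹`, `b ↦ b`. -/
def inversion : MulAut (IntStarCyclic n) :=
  MonoidHom.toMulEquiv (hom (a n)⁻¹ (b n) b_pow) (hom (a n)⁻¹ (b n) b_pow)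
    (hom_ext (by simp) (by simp)) (hom_ext (by simp) (by simp))

@[simp]
theorem inversion_a : inversion (a n) = (a n)⁻¹ := by simp [inversion]

@[simp]
theorem inversion_b : inversion (b n) = b n := by simp [inversion]

theorem zpow_zpow_b_of_mul_eq_one {k l : ℤ} (h : (k * l : ZMod n) = 1) :
    (b n ^ k) ^ l = b n := by
  obtain ⟨c, hc⟩ : (n : ℤ) ∣ k * l - 1 := by
    rw [← ZMod.intCast_zmod_eq_zero_iff_dvd]
    simp [h]
  rw [← zpow_mul, show k * l = 1 + n * c by omega, zpow_add, zpow_mul, zpow_natCast, b_pow]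
  simp

/-- The automorphism `a ↦ a`, `b ↦ b ^ k`. -/
def powerMap (k l : ℤ) (h : (k * l : ZMod n) = 1) : MulAut (IntStarCyclic n) :=
  MonoidHom.toMulEquiv (hom (a n) (b n ^ k) (zpow_b_pow k)) (hom (a n) (b n ^ l) (zpow_b_pow l))
    (hom_ext (by simp) (by simp [zpow_zpow_b_of_mul_eq_one ((mul_comm _ _).trans h)]))
    (hom_ext (by simp) (by simp [zpow_zpow_b_of_mul_eq_one h]))

@[simp]
theorem powerMap_a (k l : ℤ) (h : (k * l : ZMod n) = 1) : powerMap k l h (a n) = a n := by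
  simp [powerMap]

@[simp]
theorem powerMap_b (k l : ℤ) (h : (k * l : ZMod n) = 1) : powerMap k l h (b n) = b n ^ k := by
  simp [powerMap]

theorem expA_apply_b [NeZero n] (f : IntStarCyclic n →* IntStarCyclic n) :
    expA (f (b n)) = 1 := by
  have := congrArg (fun t => toAdd (expA (f t))) (b_pow (n := n))
  simpa [NeZero.ne n] using this

theorem expA_apply [NeZero n] (f : IntStarCyclic n →* IntStarCyclic n) (g : IntStarCyclic n) :
    toAdd (expA (f g)) = toAdd (expA (f (a n))) * toAdd (expA g) := by
  have : expA.comp f =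
      (AddMonoidHom.toMultiplicative (AddMonoidHom.mulLeft (toAdd (expA (f (a n)))))).comp expA :=
    hom_ext (by simp) (by simp [expA_apply_b])
  exact congrArg toAdd (DFunLike.congr_fun this g)

theorem expB_apply (f : IntStarCyclic n →* IntStarCyclic n) (g : IntStarCyclic n) :
    toAdd (expB (f g)) =
      toAdd (expB (f (a n))) * (toAdd (expA g) : ℤ) + toAdd (expB (f (b n))) * toAdd (expB g) := by
  have : expB.comp f =
      (AddMonoidHom.toMultiplicative ((AddMonoidHom.mulLeft (toAdd (expB (f (a n))))).comp
        (Int.castAddHom (ZMod n)))).comp expA *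
      (AddMonoidHom.toMultiplicative (AddMonoidHom.mulLeft (toAdd (expB (f (b n)))))).comp expB :=
    hom_ext (by simp) (by simp)
  exact congrArg toAdd (DFunLike.congr_fun this g)

/-- The action of an automorphism on the quotient `ℤ`. -/
def sign [NeZero n] : MulAut (IntStarCyclic n) →* ℤˣ :=
  MonoidHom.toHomUnits
    { toFun := fun f => toAdd (expA (f (a n)))
      map_one' := by simp
      map_mul' := fun f g => expA_apply f.toMonoidHom (g (a n)) }

theorem coe_sign [NeZero n] (f : MulAut (IntStarCyclic n)) :
    (sign f : ℤ) = toAdd (expA (f (a n))) := rfl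

/-- The action of an automorphism on the torsion of the abelianization. -/
def mult [NeZero n] : MulAut (IntStarCyclic n) →* (ZMod n)ˣ :=
  MonoidHom.toHomUnits
    { toFun := fun f => toAdd (expB (f (b n)))
      map_one' := by simp
      map_mul' := fun f g => by
        have := expB_apply f.toMonoidHom (g (b n))
        simpa [show expA (g (b n)) = 1 from expA_apply_b g.toMonoidHom] using this }

theorem coe_mult [NeZero n] (f : MulAut (IntStarCyclic n)) :
    (mult f : ZMod n) = toAdd (expB (f (b n))) := rfl

theorem expB_mul_apply [NeZero n] (f g : MulAut (IntStarCyclic n)) :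
    toAdd (expB ((f * g) (a n))) =
      toAdd (expB (f (a n))) * ((sign g : ℤ) : ZMod n) + mult f * toAdd (expB (g (a n))) :=
  expB_apply f.toMonoidHom (g (a n))

end IntStarCyclic

/-- The action of the automorphism group of the rotation subgroup on the dihedral group which
fixes the reflection `sr 0`. -/
def DihedralGroup.unitsAction (n : ℕ) : (ZMod n)ˣ →* MulAut (DihedralGroup n) where
  toFun u :=
    { toFun := fun x => match x with
        | .r i => .r ((u : ZMod n) * i)
        | .sr i => .sr ((u : ZMod n) * i)
      invFun := fun x => match x with
        | .r i => .r (((u⁻¹ : (ZMod n)ˣ) : ZMod n) * i)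
        | .sr i => .sr (((u⁻¹ : (ZMod n)ˣ) : ZMod n) * i)
      left_inv := by rintro (i | i) <;> simp
      right_inv := by rintro (i | i) <;> simp
      map_mul' := by rintro (i | i) (j | j) <;> simp [mul_add, mul_sub] }
  map_one' := by ext (i | i) <;> simp
  map_mul' u v := by ext (i | i) <;> simp [mul_assoc]

@[simp]
theorem DihedralGroup.unitsAction_r {n : ℕ} (u : (ZMod n)ˣ) (i : ZMod n) :
    unitsAction n u (r i) = r ((u : ZMod n) * i) := rfl

@[simp]
theorem DihedralGroup.unitsAction_sr {n : ℕ} (u : (ZMod n)ˣ) (i : ZMod n) :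
    unitsAction n u (sr i) = sr ((u : ZMod n) * i) := rfl

namespace IntStarCyclic

open Multiplicative DihedralGroup

variable {n : ℕ} [NeZero n]

/-- The homomorphism to `Dₙ ⋊ Aut(Cₙ)` recording the action on the abelianization; its kernel is
the group of inner automorphisms. -/
def toSemidirect : MulAut (IntStarCyclic n) →* DihedralGroup n ⋊[unitsAction n] (ZMod n)ˣ where
  toFun f := ⟨if sign f = 1 then r (toAdd (expB (f (a n)))) else sr (toAdd (expB (f (a n)))),
    mult f⟩
  map_one' := by
    ext <;> simp
  map_mul' f g := by
    refine SemidirectProduct.ext ?_ (by simp)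
    simp only [SemidirectProduct.mul_left, expB_mul_apply, map_mul]
    rcases Int.units_eq_one_or (sign f) with hf | hf <;>
      rcases Int.units_eq_one_or (sign g) with hg | hg <;>
      simp [hf, hg, add_comm, sub_eq_add_neg, show (-1 : ℤˣ) ≠ 1 by decide]

theorem toSemidirect_eq_one_iff (f : MulAut (IntStarCyclic n)) :
    toSemidirect f = 1 ↔
      expA (f (a n)) = ofAdd 1 ∧ expB (f (a n)) = 1 ∧ expB (f (b n)) = ofAdd 1 := by
  have h1 : sign f = 1 ↔ expA (f (a n)) = ofAdd 1 := by
    rw [Units.ext_iff, coe_sign]; exact Iff.rfl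
  have h2 : mult f = 1 ↔ expB (f (b n)) = ofAdd 1 := by
    rw [Units.ext_iff, coe_mult]; exact Iff.rfl
  rw [SemidirectProduct.ext_iff, ← h1, ← h2, ← and_assoc]
  refine and_congr ?_ Iff.rfl
  by_cases h : sign f = 1
  · simp only [toSemidirect, MonoidHom.coe_mk, OneHom.coe_mk, h, if_true, true_and,
      SemidirectProduct.one_left, DihedralGroup.one_def, r.injEq, toAdd_eq_zero]
  · simp only [toSemidirect, MonoidHom.coe_mk, OneHom.coe_mk, h, if_false, false_and,
      SemidirectProduct.one_left, DihedralGroup.one_def, reduceCtorEq]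

theorem toSemidirect_conj (g : IntStarCyclic n) : toSemidirect (MulAut.conj g) = 1 := by
  rw [toSemidirect_eq_one_iff]
  simp

theorem mem_innAut_of_toSemidirect_eq_one {f : MulAut (IntStarCyclic n)}
    (hf : toSemidirect f = 1) : f ∈ innAut (IntStarCyclic n) := by
  obtain ⟨h, z, hz⟩ := exists_conj_zpow_b_of_pow_eq_one (g := f (b n)) (NeZero.ne n)
    (by rw [← map_pow, b_pow, map_one])
  suffices key : ∀ f : MulAut (IntStarCyclic n), toSemidirect f = 1 → f (b n) = b n ^ z →
      f ∈ innAut (IntStarCyclic n) by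
    have := key ((MulAut.conj h)⁻¹ * f) (by rw [map_mul, map_inv, toSemidirect_conj, hf]; simp)
      (by simp [hz, ← map_inv, mul_assoc])
    exact (Subgroup.mul_mem_cancel_left _ (inv_mem (MonoidHom.mem_range.2 ⟨h, rfl⟩))).1 this
  clear hz hf f
  intro f hf hz
  obtain ⟨hA, hB, hb⟩ := (toSemidirect_eq_one_iff f).1 hf
  have hfb : f (b n) = b n := by
    obtain ⟨c, hc⟩ : (n : ℤ) ∣ z - 1 := by
      rw [← ZMod.intCast_zmod_eq_zero_iff_dvd]
      rw [hz, map_zpow, expB_b, ← ofAdd_zsmul] at hb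
      have := ofAdd.injective hb
      simp only [zsmul_eq_mul, mul_one] at this
      simp [this]
    rw [hz, show z = 1 + n * c by omega, zpow_add, zpow_mul, zpow_natCast, b_pow]
    simp
  have hclosure : Subgroup.closure {f (a n), b n} = ⊤ := by
    have := congrArg (Subgroup.map f.toMonoidHom) (closure_a_b (n := n))
    rw [Subgroup.map_top_of_surjective _ f.surjective, MonoidHom.map_closure,
      Set.image_pair] at this
    simpa [hfb] using this
  obtain ⟨p, q, s, -, hpq⟩ := eq_of_closure_eq_top hclosure
  rw [hpq] at hA hB
  obtain rfl : s = 1 := by simpa using congrArg toAdd hA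
  have hpq' : b n ^ q = b n ^ (-p) := by
    have h0 : (p + q : ZMod n) = 0 := by simpa using congrArg toAdd hB
    obtain ⟨c, hc⟩ : (n : ℤ) ∣ p + q := by
      rw [← ZMod.intCast_zmod_eq_zero_iff_dvd]
      simpa using h0
    rw [show q = -p + n * c by omega, zpow_add, zpow_mul, zpow_natCast, b_pow]
    simp
  refine ⟨b n ^ p, MulEquiv.toMonoidHom_injective (hom_ext ?_ ?_)⟩
  · simp only [MulEquiv.toMonoidHom_eq_coe, MonoidHom.coe_coe, MulAut.conj_apply, hpq, hpq',
      zpow_one, zpow_neg]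
  · simp only [MulEquiv.toMonoidHom_eq_coe, MonoidHom.coe_coe, MulAut.conj_apply, hfb]
    group

theorem ker_toSemidirect : (toSemidirect (n := n)).ker = innAut (IntStarCyclic n) := by
  refine le_antisymm (fun f hf => mem_innAut_of_toSemidirect_eq_one hf) ?_
  rintro _ ⟨g, rfl⟩
  exact toSemidirect_conj g

theorem toSemidirect_translation (z : ℤ) :
    toSemidirect (translation (n := n) z) = SemidirectProduct.inl (r (z : ZMod n)) := by
  refine SemidirectProduct.ext ?_ (Units.ext ?_)
  · have : sign (translation (n := n) z) = 1 := Units.ext (by simp [coe_sign])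
    simp [toSemidirect, this]
  · simp [toSemidirect, coe_mult]

theorem toSemidirect_inversion :
    toSemidirect (inversion (n := n)) = SemidirectProduct.inl (sr 0) := by
  refine SemidirectProduct.ext ?_ (Units.ext ?_)
  · have : sign (inversion (n := n)) = -1 := Units.ext (by simp [coe_sign])
    simp [toSemidirect, this, show (-1 : ℤˣ) ≠ 1 by decide]
  · simp [toSemidirect, coe_mult]

theorem toSemidirect_powerMap {k l : ℤ} (h : (k * l : ZMod n) = 1) (u : (ZMod n)ˣ)
    (hu : (u : ZMod n) = k) :
    toSemidirect (powerMap k l h) = SemidirectProduct.inr u := by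
  refine SemidirectProduct.ext ?_ (Units.ext ?_)
  · have : sign (powerMap k l h) = 1 := Units.ext (by simp [coe_sign])
    simp [toSemidirect, this]
  · simp [toSemidirect, coe_mult, hu]

theorem toSemidirect_surjective : Function.Surjective (toSemidirect (n := n)) := by
  rintro ⟨d, u⟩
  rw [← MonoidHom.mem_range, SemidirectProduct.mk_eq_inl_mul_inr]
  refine mul_mem ?_ ?_
  · have hr : ∀ i : ZMod n, SemidirectProduct.inl (r i) ∈ (toSemidirect (n := n)).range := by
      intro i
      obtain ⟨z, rfl⟩ := ZMod.intCast_surjective i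
      exact ⟨_, toSemidirect_translation z⟩
    rcases d with i | i
    · exact hr i
    · have : (sr i : DihedralGroup n) = sr 0 * r i := by simp
      rw [this, map_mul]
      exact mul_mem ⟨_, toSemidirect_inversion⟩ (hr i)
  · obtain ⟨k, hk⟩ := ZMod.intCast_surjective (u : ZMod n)
    obtain ⟨l, hl⟩ := ZMod.intCast_surjective ((u⁻¹ : (ZMod n)ˣ) : ZMod n)
    exact ⟨_, toSemidirect_powerMap (k := k) (l := l) (by rw [hk, hl, Units.mul_inv]) u hk.symm⟩

/-- The outer automorphism group of `ℤ * Cₙ`. -/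
noncomputable def outEquiv :
    Out (IntStarCyclic n) ≃* DihedralGroup n ⋊[unitsAction n] (ZMod n)ˣ :=
  QuotientGroup.liftEquiv _ toSemidirect_surjective ker_toSemidirect.symm

end IntStarCyclic

theorem statement_16 (n : ℕ) (hn : 1 < n) :
    ∃ act : (ZMod n)ˣ →* MulAut (DihedralGroup n),
      (∀ (u : (ZMod n)ˣ) (i : ZMod n), act u (DihedralGroup.r i) = DihedralGroup.r ((u : ZMod n) * i)) ∧
      (∀ u : (ZMod n)ˣ, act u (DihedralGroup.sr 0) = DihedralGroup.sr 0) ∧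
      Nonempty (Out (PresentedGroup ({FreeGroup.of (1 : Fin 2) ^ n} : Set (FreeGroup (Fin 2)))) ≃*
        DihedralGroup n ⋊[act] (ZMod n)ˣ) ∧
      Nat.card (Out (PresentedGroup ({FreeGroup.of (1 : Fin 2) ^ n} : Set (FreeGroup (Fin 2))))) =
        2 * n * Nat.totient n := by
  have : NeZero n := ⟨by omega⟩
  refine ⟨DihedralGroup.unitsAction n, fun _ _ => rfl, fun u => ?_, ⟨IntStarCyclic.outEquiv⟩, ?_⟩
  · simp
  · rw [Nat.card_congr IntStarCyclic.outEquiv.toEquiv, SemidirectProduct.card,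
      DihedralGroup.nat_card, Nat.card_eq_fintype_card, ZMod.card_units_eq_totient]
end

section
/- Let G = ⟨a, b; r⟩ with r ⊆ F(a,b)′. If a Nielsen transformation φ of F(a,b) defines an inner automorphism of G, then φ is an inner automorphism of F(a,b). -/
namespace FreeGroup

variable {α : Type*} [DecidableEq α]

/-- The length of the longest common prefix of two lists. -/
def commonPrefixLength {β : Type*} [DecidableEq β] : List β → List β → ℕ
  | a :: L, b :: M => if a = b then commonPrefixLength L M + 1 else 0
  | _, _ => 0

theorem le_commonPrefixLength_iff {β : Type*} [DecidableEq β] (k : ℕ) (L M : List β) :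
    k ≤ commonPrefixLength L M ↔ k ≤ L.length ∧ k ≤ M.length ∧ L.take k = M.take k := by
  induction L generalizing k M with
  | nil => cases M <;> cases k <;> simp [commonPrefixLength]
  | cons a L ih =>
    cases M with
    | nil => cases k <;> simp [commonPrefixLength]
    | cons b M =>
      cases k with
      | zero => simp
      | succ k =>
        by_cases hab : a = b
        · simp [commonPrefixLength, hab, ih]
        · simp [commonPrefixLength, hab]

theorem IsReduced.norm_mk {L : List (α × Bool)} (h : IsReduced L) : norm (mk L) = L.length := by
  rw [norm, toWord_mk, h.reduce_eq]

theorem IsReduced.invRev {L : List (α × Bool)} (h : IsReduced L) : IsReduced (invRev L) := by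
  rw [isReduced_iff_reduce_eq, reduce_invRev, h.reduce_eq]

theorem norm_inv_mk_mul_mk {L M : List (α × Bool)} (hL : IsReduced L) (hM : IsReduced M) :
    norm ((mk L)⁻¹ * mk M) + 2 * commonPrefixLength L M = L.length + M.length := by
  induction L generalizing M with
  | nil => simp [commonPrefixLength, ← one_eq_mk, hM.norm_mk]
  | cons a L ih =>
    cases M with
    | nil => simp [commonPrefixLength, ← one_eq_mk, hL.invRev.norm_mk]
    | cons b M =>
      by_cases hab : a = b
      · subst hab
        have e : (mk (a :: L))⁻¹ * mk (a :: M) = (mk L)⁻¹ * mk M := by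
          rw [← List.singleton_append, ← List.singleton_append (l := M), ← mul_mk, ← mul_mk]
          group
        have := ih (hL.infix ⟨[a], [], by simp⟩) (M := M) (hM.infix ⟨[a], [], by simp⟩)
        simp only [e, commonPrefixLength, if_true, List.length_cons]
        omega
      · have hr : IsReduced (invRev (a :: L) ++ b :: M) := by
          have h := hL.invRev
          rw [invRev_cons] at h ⊢
          refine List.IsChain.append h hM ?_
          obtain ⟨a₁, a₂⟩ := a
          obtain ⟨b₁, b₂⟩ := b
          simp [FreeGroup.invRev]
          rintro rfl
          cases a₂ <;> cases b₂ <;> simp_all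
        rw [inv_mk, mul_mk, hr.norm_mk]
        simp [commonPrefixLength, hab]

/-- The Gromov product of `u` and `v` based at `1` in the Cayley tree of the free group. -/
def gromovProduct (u v : FreeGroup α) : ℕ := commonPrefixLength u.toWord v.toWord

theorem norm_inv_mul_add (u v : FreeGroup α) :
    norm (u⁻¹ * v) + 2 * gromovProduct u v = norm u + norm v := by
  have := norm_inv_mk_mul_mk (isReduced_toWord (x := u)) (isReduced_toWord (x := v))
  rwa [mk_toWord, mk_toWord] at this

theorem le_gromovProduct_iff (k : ℕ) (u v : FreeGroup α) :
    k ≤ gromovProduct u v ↔ k ≤ norm u ∧ k ≤ norm v ∧ u.toWord.take k = v.toWord.take k :=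
  le_commonPrefixLength_iff ..

theorem le_gromovProduct_trans {k : ℕ} {u v w : FreeGroup α} (h : k ≤ gromovProduct u v)
    (h' : k ≤ gromovProduct v w) : k ≤ gromovProduct u w := by
  rw [le_gromovProduct_iff] at *
  exact ⟨h.1, h'.2.1, h.2.2.trans h'.2.2⟩

theorem gromovProduct_comm (u v : FreeGroup α) : gromovProduct u v = gromovProduct v u :=
  eq_of_forall_le_iff fun k => by simp only [le_gromovProduct_iff]; tauto

theorem gromovProduct_eq_of_lt {u v w : FreeGroup α}
    (h : gromovProduct u v < gromovProduct v w) : gromovProduct u w = gromovProduct u v := by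
  refine le_antisymm ?_ (le_gromovProduct_trans le_rfl h.le)
  by_contra! h'
  have := le_gromovProduct_trans (Nat.succ_le_of_lt h') (gromovProduct_comm v w ▸ Nat.succ_le_of_lt h)
  omega

theorem exists_norm_eq_of_le_norm {k : ℕ} {u : FreeGroup α} (h : k ≤ norm u) :
    ∃ t : FreeGroup α, norm t = k ∧ norm (t⁻¹ * u) + k = norm u := by
  have hr := isReduced_toWord (x := u)
  refine ⟨mk (u.toWord.take k), ?_, ?_⟩
  · rw [(hr.infix (List.take_prefix k _).isInfix).norm_mk]
    exact List.length_take_of_le h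
  · have : (mk (u.toWord.take k))⁻¹ * u = mk (u.toWord.drop k) := by
      rw [inv_mul_eq_iff_eq_mul, mul_mk, List.take_append_drop, mk_toWord]
    rw [this, (hr.infix (List.drop_suffix k _).isInfix).norm_mk, List.length_drop]
    exact Nat.sub_add_cancel h

theorem norm_lt_norm_mul_self {u : FreeGroup α} (hu : u ≠ 1) : norm u < norm (u * u) := by
  have hr := isReduced_toWord (x := u)
  have h := congrArg List.length (reduceCyclically.reduce_flatten_replicate_succ hr 1)
  have h' := congrArg List.length (reduceCyclically.conj_conjugator_reduceCyclically u.toWord)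
  have hne : reduceCyclically u.toWord ≠ [] := by
    intro h0
    have := reduceCyclically.conj_conjugator_reduceCyclically u.toWord
    rw [h0, List.append_nil] at this
    apply hu
    rw [← mk_toWord (x := u), ← this, ← mul_mk, ← inv_mk, mul_inv_cancel]
  have := List.length_pos_iff.2 hne
  simp [List.replicate_succ] at h h'
  rw [norm, norm, toWord_mul]
  omega

theorem norm_mul_add (u v : FreeGroup α) :
    norm (u * v) + 2 * gromovProduct u⁻¹ v = norm u + norm v := by
  simpa using norm_inv_mul_add u⁻¹ v

theorem two_mul_gromovProduct_inv_self_lt {u : FreeGroup α} (hu : u ≠ 1) :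
    2 * gromovProduct u⁻¹ u < norm u := by
  have := norm_lt_norm_mul_self hu
  have := norm_mul_add u u
  omega

theorem gromovProduct_add_lt_norm {x y : FreeGroup α} (hx : x ≠ 1)
    (hyx : norm y ≤ norm (y * x)) (hyx' : norm x ≤ norm (y * x)) (hxy : norm y ≤ norm (x * y))
    (hconj : ∀ t, norm x + norm y ≤ norm (t⁻¹ * x * t) + norm (t⁻¹ * (y * x) * t)) :
    gromovProduct y⁻¹ x + gromovProduct x⁻¹ y < norm x := by
  have h1 := norm_mul_add y x
  have h2 := norm_mul_add x y
  by_contra! h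
  have hpos : 0 < norm x := Nat.pos_of_ne_zero (mt norm_eq_zero.1 hx)
  obtain ⟨k, hk⟩ : ∃ k, norm x = 2 * k := ⟨gromovProduct y⁻¹ x, by omega⟩
  have hk1 : gromovProduct y⁻¹ x = k := by omega
  have hk2 : gromovProduct x⁻¹ y = k := by omega
  have hky : k ≤ norm y := (le_gromovProduct_iff k x⁻¹ y |>.1 hk2.ge).2.1
  obtain ⟨t, ht, htx⟩ := exists_norm_eq_of_le_norm (k := k) (u := x⁻¹) (by rw [norm_inv_eq]; omega)
  rw [norm_inv_eq] at htx
  have hxt : norm (x * t) = k := by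
    rw [← norm_inv_eq, mul_inv_rev]; omega
  -- `t` is a prefix of `y` and `x * t` is a prefix of `y⁻¹`
  have h3 := norm_inv_mul_add t x⁻¹
  rw [norm_inv_eq] at h3
  have h4 : k ≤ gromovProduct t y :=
    le_gromovProduct_trans (v := x⁻¹) (by omega) hk2.ge
  have h5 := norm_inv_mul_add (x * t) x
  rw [show (x * t)⁻¹ * x = t⁻¹ by group, norm_inv_eq] at h5
  have h6 : k ≤ gromovProduct (x * t) y⁻¹ :=
    le_gromovProduct_trans (v := x) (by omega) (gromovProduct_comm y⁻¹ x ▸ hk1.ge)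
  have h7 := norm_inv_mul_add (x * t) y⁻¹
  rw [← norm_inv_eq, show ((x * t)⁻¹ * y⁻¹)⁻¹ = y * (x * t) by group, norm_inv_eq] at h7
  have h8 := norm_inv_mul_add y (y * (x * t))
  rw [show y⁻¹ * (y * (x * t)) = x * t by group] at h8
  have h10 := norm_inv_mul_add t (y * (x * t))
  have h13 := norm_mul_le (y * (x * t)) (x * t)⁻¹
  rw [mul_inv_cancel_right, norm_inv_eq] at h13
  have h11 : k ≤ gromovProduct t (y * (x * t)) :=
    le_gromovProduct_trans (v := y) h4 (by omega)
  have h14 := norm_mul_le t⁻¹ (x * t)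
  rw [norm_inv_eq] at h14
  have := hconj t
  rw [mul_assoc, mul_assoc, mul_assoc y] at this
  omega

/-- A pair of elements of a free group, given as a homomorphism, whose total length decreases
under no elementary Nielsen transformation, not even up to conjugation. -/
structure IsMinimalPair (f : FreeGroup (Fin 2) →* FreeGroup α) : Prop where
  intro ::
  ne_one : ∀ p, f (mk [p]) ≠ 1
  norm_le_norm_mul : ∀ p q : Fin 2 × Bool, p.1 ≠ q.1 →
    norm (f (mk [q])) ≤ norm (f (mk [p]) * f (mk [q]))
  norm_add_norm_le : ∀ p q : Fin 2 × Bool, p.1 ≠ q.1 → ∀ t,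
    norm (f (mk [p])) + norm (f (mk [q])) ≤
      norm (t⁻¹ * f (mk [p]) * t) + norm (t⁻¹ * (f (mk [q]) * f (mk [p])) * t)

theorem mk_not {β : Type*} (i : β) (b : Bool) : mk [(i, !b)] = (mk [(i, b)])⁻¹ := by
  simp [inv_mk, FreeGroup.invRev]

namespace IsMinimalPair

variable {f : FreeGroup (Fin 2) →* FreeGroup α}

theorem norm_le_norm_mul' (hf : IsMinimalPair f) {p q : Fin 2 × Bool} (h : p.1 ≠ q.1) :
    norm (f (mk [p])) ≤ norm (f (mk [p]) * f (mk [q])) := by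
  have := hf.norm_le_norm_mul (q.1, !q.2) (p.1, !p.2) h.symm
  rwa [mk_not, mk_not, _root_.map_inv, _root_.map_inv, norm_inv_eq, ← mul_inv_rev, norm_inv_eq] at this

theorem two_mul_gromovProduct_le_right (hf : IsMinimalPair f) {p q : Fin 2 × Bool}
    (h : p.1 = q.1 → p.2 = q.2) :
    2 * gromovProduct (f (mk [p]))⁻¹ (f (mk [q])) ≤ norm (f (mk [q])) := by
  by_cases hpq : p.1 = q.1
  · obtain rfl : p = q := Prod.ext hpq (h hpq)
    exact (two_mul_gromovProduct_inv_self_lt (hf.ne_one p)).le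
  · have := norm_mul_add (f (mk [p])) (f (mk [q]))
    have := hf.norm_le_norm_mul' hpq
    omega

theorem two_mul_gromovProduct_le_left (hf : IsMinimalPair f) {p q : Fin 2 × Bool}
    (h : p.1 = q.1 → p.2 = q.2) :
    2 * gromovProduct (f (mk [p]))⁻¹ (f (mk [q])) ≤ norm (f (mk [p])) := by
  by_cases hpq : p.1 = q.1
  · obtain rfl : p = q := Prod.ext hpq (h hpq)
    exact (two_mul_gromovProduct_inv_self_lt (hf.ne_one p)).le
  · have := norm_mul_add (f (mk [p])) (f (mk [q]))
    have := hf.norm_le_norm_mul p q hpq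
    omega

theorem gromovProduct_add_lt (hf : IsMinimalPair f) {p q r : Fin 2 × Bool}
    (hpq : p.1 = q.1 → p.2 = q.2) (hqr : q.1 = r.1 → q.2 = r.2) :
    gromovProduct (f (mk [p]))⁻¹ (f (mk [q])) + gromovProduct (f (mk [q]))⁻¹ (f (mk [r])) <
      norm (f (mk [q])) := by
  have h1 := hf.two_mul_gromovProduct_le_right hpq
  have h2 := hf.two_mul_gromovProduct_le_left hqr
  have h0 := two_mul_gromovProduct_inv_self_lt (hf.ne_one q)
  by_cases e1 : p.1 = q.1
  · obtain rfl : p = q := Prod.ext e1 (hpq e1)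
    omega
  by_cases e2 : q.1 = r.1
  · obtain rfl : q = r := Prod.ext e2 (hqr e2)
    omega
  have e3 : p.1 = r.1 := by omega
  obtain ⟨i, b⟩ := r
  obtain ⟨j, c⟩ := p
  obtain rfl : j = i := e3
  by_cases e4 : c = b
  · subst e4
    exact gromovProduct_add_lt_norm (hf.ne_one q) (hf.norm_le_norm_mul' e1)
      (hf.norm_le_norm_mul _ q e1) (hf.norm_le_norm_mul q _ e2)
      (hf.norm_add_norm_le q _ e2)
  · obtain rfl : c = !b := by cases b <;> cases c <;> simp_all
    rw [mk_not, _root_.map_inv, inv_inv] at h1 ⊢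
    by_contra! h
    have := le_gromovProduct_trans
      (k := norm (f (mk [q])) - gromovProduct (f (mk [(j, b)])) (f (mk [q])))
      (u := (f (mk [q]))⁻¹) (v := f (mk [(j, b)])) (w := f (mk [q])) (by omega) (by omega)
    omega

theorem gromovProduct_cons (hf : IsMinimalPair f) {p q : Fin 2 × Bool}
    {L : List (Fin 2 × Bool)} (h : IsReduced (p :: q :: L)) :
    gromovProduct (f (mk [p]))⁻¹ (f (mk (q :: L))) =
        gromovProduct (f (mk [p]))⁻¹ (f (mk [q])) ∧
      L.length + 1 + gromovProduct (f (mk [p]))⁻¹ (f (mk [q])) ≤ norm (f (mk (q :: L))) := by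
  induction L generalizing p q with
  | nil =>
    rw [isReduced_cons_cons] at h
    have := hf.gromovProduct_add_lt h.1 (r := q) (fun _ => rfl)
    simp
    omega
  | cons r L ih =>
    rw [isReduced_cons_cons] at h
    obtain ⟨ih1, ih2⟩ := ih h.2
    have hqr := h.2
    rw [isReduced_cons_cons] at hqr
    have key := hf.gromovProduct_add_lt h.1 hqr.1
    have e : f (mk (q :: r :: L)) = f (mk [q]) * f (mk (r :: L)) := by
      rw [← _root_.map_mul, mul_mk, List.singleton_append]
    have h1 := norm_mul_add (f (mk [q])) (f (mk (r :: L)))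
    have h2 := norm_inv_mul_add (f (mk [q])) (f (mk (q :: r :: L)))
    rw [e, inv_mul_cancel_left, ← e] at h2
    rw [← e] at h1
    constructor
    · exact gromovProduct_eq_of_lt (by omega)
    · rw [List.length_cons]
      omega

theorem norm_le_norm_map (hf : IsMinimalPair f) (w : FreeGroup (Fin 2)) :
    norm w ≤ norm (f w) := by
  have hr := isReduced_toWord (x := w)
  rw [norm, ← mk_toWord (x := w), toWord_mk, reduce_toWord]
  generalize w.toWord = L at hr
  cases L with
  | nil => simp
  | cons q L =>
    have := (hf.gromovProduct_cons (p := q) (q := q) (L := L)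
      (isReduced_cons_cons.2 ⟨fun _ => rfl, hr⟩)).2
    rw [List.length_cons]
    omega

end IsMinimalPair

/-- The automorphism exchanging the two generators of the free group of rank two. -/
def swapAut : MulAut (FreeGroup (Fin 2)) := freeGroupCongr (Equiv.swap 0 1)

/-- The automorphism inverting the first generator. -/
def invAut : MulAut (FreeGroup (Fin 2)) :=
  MonoidHom.toMulEquiv (lift ![(of 0)⁻¹, of 1]) (lift ![(of 0)⁻¹, of 1])
    (by ext i; fin_cases i <;> simp) (by ext i; fin_cases i <;> simp)

/-- The automorphism multiplying the second generator by the first one on the left. -/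
def mulAut : MulAut (FreeGroup (Fin 2)) :=
  MonoidHom.toMulEquiv (lift ![of 0, of 0 * of 1]) (lift ![of 0, (of 0)⁻¹ * of 1])
    (by ext i; fin_cases i <;> simp) (by ext i; fin_cases i <;> simp)

@[simp] theorem swapAut_of_zero : swapAut (of 0) = of 1 := rfl

@[simp] theorem swapAut_of_one : swapAut (of 1) = of 0 := rfl

@[simp] theorem invAut_of_zero : invAut (of 0) = (of 0)⁻¹ := rfl

@[simp] theorem invAut_of_one : invAut (of 1) = of 1 := rfl

@[simp] theorem mulAut_of_zero : mulAut (of 0) = of 0 := rfl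

@[simp] theorem mulAut_of_one : mulAut (of 1) = of 0 * of 1 := rfl

theorem mulAut_ext {φ ψ : MulAut (FreeGroup (Fin 2))} (h0 : φ (of 0) = ψ (of 0))
    (h1 : φ (of 1) = ψ (of 1)) : φ = ψ := by
  have : φ.toMonoidHom = ψ.toMonoidHom := by
    ext i
    fin_cases i
    · exact h0
    · exact h1
  exact MulEquiv.ext fun w => DFunLike.congr_fun this w

theorem swapAut_mul_self : swapAut * swapAut = 1 := by
  apply mulAut_ext <;> simp

theorem invAut_mul_self : invAut * invAut = 1 := by
  apply mulAut_ext <;> simp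

/-- The automorphisms permuting the generators and their inverses. -/
def signedPermAut : Subgroup (MulAut (FreeGroup (Fin 2))) := Subgroup.closure {swapAut, invAut}

theorem swapAut_mem : swapAut ∈ signedPermAut := Subgroup.subset_closure (by simp)

theorem invAut_mem : invAut ∈ signedPermAut := Subgroup.subset_closure (by simp)

theorem exists_signedPermAut {p q : Fin 2 × Bool} (h : p.1 ≠ q.1) :
    ∃ δ ∈ signedPermAut, δ (of 0) = mk [p] ∧ δ (of 1) = mk [q] := by
  have ht := swapAut_mem
  have hn := invAut_mem
  have key : ∀ i b, mk [((i : Fin 2), b)] = if b then of i else (of i)⁻¹ := by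
    intro i b
    cases b
    · exact mk_not i true
    · rfl
  obtain ⟨i, b⟩ := p
  obtain ⟨j, c⟩ := q
  simp only [key]
  fin_cases i <;> fin_cases j <;> simp only [ne_eq, not_true_eq_false] at h <;>
    cases b <;> cases c
  · exact ⟨invAut * (swapAut * invAut * swapAut),
      mul_mem hn (mul_mem (mul_mem ht hn) ht), by simp⟩
  · exact ⟨invAut, hn, by simp⟩
  · exact ⟨swapAut * invAut * swapAut, mul_mem (mul_mem ht hn) ht, by simp⟩
  · exact ⟨1, one_mem _, by simp⟩
  · exact ⟨invAut * swapAut * invAut, mul_mem (mul_mem hn ht) hn, by simp⟩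
  · exact ⟨swapAut * invAut, mul_mem ht hn, by simp⟩
  · exact ⟨invAut * swapAut, mul_mem hn ht, by simp⟩
  · exact ⟨swapAut, ht, by simp⟩

theorem exists_map_of_eq_mk {δ : MulAut (FreeGroup (Fin 2))} (hδ : δ ∈ signedPermAut)
    (j : Fin 2) : ∃ p, δ (of j) = mk [p] := by
  suffices h : ∀ p : Fin 2 × Bool, ∃ q, δ (mk [p]) = mk [q] from h (j, true)
  have ht : ∀ p : Fin 2 × Bool, ∃ q, swapAut (mk [p]) = mk [q] :=
    fun p => ⟨(Equiv.swap 0 1 p.1, p.2), rfl⟩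
  have hn : ∀ p : Fin 2 × Bool, ∃ q, invAut (mk [p]) = mk [q] := by
    rintro ⟨i, b⟩
    fin_cases i <;> cases b
    exacts [⟨(0, true), rfl⟩, ⟨(0, false), rfl⟩, ⟨(1, false), rfl⟩, ⟨(1, true), rfl⟩]
  have hs : ∀ s ∈ ({swapAut, invAut} : Set (MulAut (FreeGroup (Fin 2)))),
      s⁻¹ = s ∧ ∀ p : Fin 2 × Bool, ∃ q, s (mk [p]) = mk [q] := by
    rintro s (rfl | rfl)
    · exact ⟨inv_eq_of_mul_eq_one_left swapAut_mul_self, ht⟩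
    · exact ⟨inv_eq_of_mul_eq_one_left invAut_mul_self, hn⟩
  induction hδ using Subgroup.closure_induction_left with
  | one => exact fun p => ⟨p, rfl⟩
  | mul_left s h x _ ih =>
    intro p
    obtain ⟨q, hq⟩ := ih p
    rw [MulAut.mul_apply, hq]
    exact (hs s h).2 q
  | inv_mul_cancel s h x _ ih =>
    intro p
    obtain ⟨q, hq⟩ := ih p
    rw [(hs s h).1, MulAut.mul_apply, hq]
    exact (hs s h).2 q

/-- The automorphisms generated by the elementary Nielsen transformations. -/
def nielsenAut : Subgroup (MulAut (FreeGroup (Fin 2))) :=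
  Subgroup.closure {swapAut, invAut, mulAut}

theorem signedPermAut_le_nielsenAut : signedPermAut ≤ nielsenAut :=
  Subgroup.closure_mono (by rintro _ (rfl | rfl) <;> simp)

theorem mulAut_mem : mulAut ∈ nielsenAut := Subgroup.subset_closure (by simp)

theorem exists_eq_mk_of_norm_le_one {w : FreeGroup α} (hw : w ≠ 1) (h : norm w ≤ 1) :
    ∃ p, w = mk [p] := by
  have h1 : w.toWord.length = 1 :=
    le_antisymm h (Nat.one_le_iff_ne_zero.2 (mt norm_eq_zero.1 hw))
  obtain ⟨p, hp⟩ := List.length_eq_one_iff.1 h1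
  exact ⟨p, by rw [← hp, mk_toWord]⟩

theorem norm_map_mk_singleton (ψ : MulAut (FreeGroup (Fin 2))) (p : Fin 2 × Bool) :
    norm (ψ (mk [p])) = norm (ψ (of p.1)) := by
  obtain ⟨i, b⟩ := p
  cases b
  · rw [← Bool.not_true, mk_not, _root_.map_inv, norm_inv_eq]
    rfl
  · rfl

theorem IsMinimalPair.mem_signedPermAut {ψ : MulAut (FreeGroup (Fin 2))}
    (h : IsMinimalPair ψ.toMonoidHom) : ψ ∈ signedPermAut := by
  have hle : ∀ i, ∃ p, ψ⁻¹ (of i) = mk [p] := by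
    intro i
    refine exists_eq_mk_of_norm_le_one (by simp) ?_
    have := h.norm_le_norm_map (ψ⁻¹ (of i))
    rwa [MulEquiv.toMonoidHom_eq_coe, MonoidHom.coe_coe, MulAut.apply_inv_self, norm_of] at this
  obtain ⟨p, hp⟩ := hle 0
  obtain ⟨q, hq⟩ := hle 1
  have hpq : p.1 ≠ q.1 := by
    intro e
    obtain ⟨i, b⟩ := p
    obtain ⟨j, c⟩ := q
    obtain rfl : i = j := e
    by_cases hbc : b = c
    · subst hbc
      exact absurd (of_injective (ψ⁻¹.injective (hp.trans hq.symm))) (by decide)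
    · obtain rfl : b = !c := by cases b <;> cases c <;> simp_all
      rw [mk_not, ← hq, ← _root_.map_inv] at hp
      exact absurd (congrArg toWord (ψ⁻¹.injective hp)) (by decide)
  obtain ⟨δ, hδ, h0, h1⟩ := exists_signedPermAut hpq
  have : ψ⁻¹ = δ := mulAut_ext (hp.trans h0.symm) (hq.trans h1.symm)
  exact inv_mem_iff.1 (this ▸ hδ)

theorem conj_mem_innAut {G : Type*} [Group G] (g : G) : MulAut.conj g ∈ innAut G := ⟨g, rfl⟩

/-- **Nielsen's theorem**: up to inner automorphisms, the automorphism group of the free group of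
rank two is generated by the elementary Nielsen transformations. -/
theorem nielsenAut_sup_innAut : nielsenAut ⊔ innAut (FreeGroup (Fin 2)) = ⊤ := by
  set N := nielsenAut ⊔ innAut (FreeGroup (Fin 2)) with hN
  have hle : nielsenAut ≤ N := le_sup_left
  refine eq_top_iff.2 fun φ _ => ?_
  let len : MulAut (FreeGroup (Fin 2)) → ℕ := fun ψ => norm (ψ (of 0)) + norm (ψ (of 1))
  obtain ⟨n, hn, hmin⟩ := (measure fun m => len (φ * m)).wf.has_min (N : Set _) ⟨1, one_mem N⟩
  obtain ⟨ψ, hψ⟩ : ∃ ψ, ψ = φ * n := ⟨_, rfl⟩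
  replace hmin : ∀ m ∈ N, len ψ ≤ len (ψ * m) := fun m hm => by
    have := hmin (n * m) (mul_mem hn hm)
    rw [hψ, mul_assoc]
    exact not_lt.1 this
  have hlen : ∀ p q : Fin 2 × Bool, p.1 ≠ q.1 →
      len ψ = norm (ψ (mk [p])) + norm (ψ (mk [q])) := by
    rintro ⟨i, b⟩ ⟨j, c⟩ h
    rw [norm_map_mk_singleton, norm_map_mk_singleton]
    fin_cases i <;> fin_cases j <;> simp [len, add_comm] at h ⊢
  have key : ∀ p q : Fin 2 × Bool, p.1 ≠ q.1 → ∀ r,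
      norm (ψ (mk [p])) + norm (ψ (mk [q])) ≤
        norm (r * ψ (mk [p]) * r⁻¹) + norm (r * (ψ (mk [p]) * ψ (mk [q])) * r⁻¹) := by
    intro p q h r
    obtain ⟨δ, hδ, h0, h1⟩ := exists_signedPermAut h
    have := hmin (δ * mulAut * MulAut.conj ((ψ * δ * mulAut)⁻¹ r))
      (mul_mem (hle (mul_mem (signedPermAut_le_nielsenAut hδ) mulAut_mem))
        ((le_sup_right : _ ≤ N) (conj_mem_innAut _)))
    rw [hlen p q h] at this
    simpa [len, h0, h1, -mul_mk] using this
  have hψN : ψ ∈ N := by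
    refine hle (signedPermAut_le_nielsenAut (IsMinimalPair.mem_signedPermAut ⟨?_, ?_, ?_⟩))
    · intro p
      simp only [MulEquiv.toMonoidHom_eq_coe, MonoidHom.coe_coe, ne_eq,
        EmbeddingLike.map_eq_one_iff]
      intro h
      simpa [h] using (IsReduced.singleton (a := p)).norm_mk
    · intro p q h
      simpa using key p q h 1
    · intro p q h t
      have := key p q h (t⁻¹ * (ψ (mk [p]))⁻¹)
      simpa [mul_assoc] using this
  rw [← mul_inv_cancel_right φ n, ← hψ]
  exact mul_mem hψN (inv_mem hn)

end FreeGroup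

section Factorization

variable {G : Type*} [Group G] {t n a : G}

theorem conj_mem_of_mem_closure (ht : t * t = 1) (hn : n * n = 1) (h₁ : n * a * n = a⁻¹)
    (h₂ : t * n * t * a * (t * n * t) = a⁻¹) {d : G} (hd : d ∈ Subgroup.closure {t, n}) :
    ∀ s ∈ ({a, a⁻¹, t * a * t, (t * a * t)⁻¹} : Set G),
      d⁻¹ * s * d ∈ ({a, a⁻¹, t * a * t, (t * a * t)⁻¹} : Set G) := by
  have ht' : t⁻¹ = t := inv_eq_of_mul_eq_one_left ht
  have hn' : n⁻¹ = n := inv_eq_of_mul_eq_one_left hn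
  have htt : ∀ x, t * (t * x) = x := fun x => by rw [← mul_assoc, ht, one_mul]
  have hnn : ∀ x, n * (n * x) = x := fun x => by rw [← mul_assoc, hn, one_mul]
  have e1 : n * a⁻¹ * n = a := by rw [← h₁]; simp only [mul_assoc, hnn, hn, mul_one]
  have e2 : n * (t * a * t) * n = (t * a * t)⁻¹ := by
    rw [mul_inv_rev, mul_inv_rev, ht', ← h₂]; simp only [mul_assoc, htt, ht, mul_one]
  have e3 : n * (t * a * t)⁻¹ * n = t * a * t := by
    rw [← e2]; simp only [mul_assoc, hnn, hn, mul_one]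
  have e4 : t * (t * a * t) * t = a := by simp only [mul_assoc, htt, ht, mul_one]
  have e5 : t * a⁻¹ * t = (t * a * t)⁻¹ := by rw [mul_inv_rev, mul_inv_rev, ht', mul_assoc]
  have e6 : t * (t * a * t)⁻¹ * t = a⁻¹ := by rw [← e5]; simp only [mul_assoc, htt, ht, mul_one]
  have hs : ∀ g ∈ ({t, n} : Set G), g⁻¹ = g ∧
      ∀ s ∈ ({a, a⁻¹, t * a * t, (t * a * t)⁻¹} : Set G),
        g * s * g ∈ ({a, a⁻¹, t * a * t, (t * a * t)⁻¹} : Set G) := by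
    rintro g (rfl | rfl)
    · refine ⟨ht', ?_⟩
      rintro s (rfl | rfl | rfl | rfl) <;>
        simp only [Set.mem_insert_iff, Set.mem_singleton_iff, e4, e5, e6, true_or, or_true]
    · refine ⟨hn', ?_⟩
      rintro s (rfl | rfl | rfl | rfl) <;>
        simp only [Set.mem_insert_iff, Set.mem_singleton_iff, h₁, e1, e2, e3, true_or, or_true]
  induction hd using Subgroup.closure_induction_right with
  | one => simp
  | mul_right x _ g hg ih =>
    intro s h
    obtain ⟨hg1, hg2⟩ := hs g hg
    have := hg2 _ (ih s h)
    rwa [mul_inv_rev x g, hg1, show g * x⁻¹ * s * (x * g) = g * (x⁻¹ * s * x) * g by group]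
  | mul_inv_cancel x _ g hg ih =>
    intro s h
    obtain ⟨hg1, hg2⟩ := hs g hg
    have := hg2 _ (ih s h)
    rwa [hg1, mul_inv_rev x g, hg1, show g * x⁻¹ * s * (x * g) = g * (x⁻¹ * s * x) * g by group]

theorem exists_eq_mul_mul_of_mem_closure (ht : t * t = 1) (hn : n * n = 1)
    (h₁ : n * a * n = a⁻¹) (h₂ : t * n * t * a * (t * n * t) = a⁻¹)
    (h₃ : a⁻¹ * (t * a * t) = n * t * a) {g : G} (hg : g ∈ Subgroup.closure {t, n, a}) :
    ∃ d ∈ Subgroup.closure {t, n}, ∃ P ∈ Submonoid.closure {a, t * a * t},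
      ∃ d' ∈ Subgroup.closure {t, n}, g = d * P * d' := by
  have ht' : t⁻¹ = t := inv_eq_of_mul_eq_one_left ht
  have htD : t ∈ Subgroup.closure {t, n} := Subgroup.subset_closure (by simp)
  have hnD : n ∈ Subgroup.closure {t, n} := Subgroup.subset_closure (by simp)
  have haM : a ∈ Submonoid.closure {a, t * a * t} := Submonoid.subset_closure (by simp)
  have hbM : t * a * t ∈ Submonoid.closure {a, t * a * t} := Submonoid.subset_closure (by simp)
  have h₄ : (t * a * t)⁻¹ * a = t * n * (t * a * t) := by
    rw [mul_inv_rev, mul_inv_rev, ht']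
    calc t * (a⁻¹ * t) * a = t * (a⁻¹ * (t * a * t)) * t := by
          simp only [mul_assoc, ht, mul_one]
      _ = _ := by rw [h₃]; simp only [mul_assoc]
  have mul_pos : ∀ s ∈ ({a, a⁻¹, t * a * t, (t * a * t)⁻¹} : Set G),
      ∀ P ∈ Submonoid.closure {a, t * a * t}, ∃ d ∈ Subgroup.closure {t, n},
        ∃ P' ∈ Submonoid.closure {a, t * a * t}, ∃ d' ∈ Subgroup.closure {t, n},
          s * P = d * P' * d' := by
    rintro s (rfl | rfl | rfl | rfl) P hP
    · exact ⟨1, one_mem _, _, mul_mem haM hP, 1, one_mem _, by simp⟩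
    · induction hP using Submonoid.closure_induction_left with
      | one => exact ⟨n, hnD, a, haM, n, hnD, by rw [h₁, mul_one]⟩
      | mul_left s hs P' hP' _ =>
        rcases hs with rfl | rfl
        · exact ⟨1, one_mem _, P', hP', 1, one_mem _, by simp⟩
        · exact ⟨n * t, mul_mem hnD htD, a * P', mul_mem haM hP', 1, one_mem _, by
            rw [← mul_assoc, h₃]; simp only [mul_assoc, mul_one]⟩
    · exact ⟨1, one_mem _, _, mul_mem hbM hP, 1, one_mem _, by simp⟩
    · induction hP using Submonoid.closure_induction_left with
      | one =>
        exact ⟨t * n, mul_mem htD hnD, a, haM, n * t, mul_mem hnD htD, by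
          rw [mul_one, mul_inv_rev, mul_inv_rev, ht', ← h₁]; simp only [mul_assoc]⟩
      | mul_left s hs P' hP' _ =>
        rcases hs with rfl | rfl
        · exact ⟨t * n, mul_mem htD hnD, t * s * t * P', mul_mem hbM hP', 1, one_mem _, by
            rw [← mul_assoc, h₄]; simp only [mul_assoc, mul_one]⟩
        · exact ⟨1, one_mem _, P', hP', 1, one_mem _, by
            rw [inv_mul_cancel_left, one_mul, mul_one]⟩
  have step : ∀ s ∈ ({a, a⁻¹, t * a * t, (t * a * t)⁻¹} : Set G), ∀ x,
      (∃ d ∈ Subgroup.closure {t, n}, ∃ P ∈ Submonoid.closure {a, t * a * t},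
        ∃ d' ∈ Subgroup.closure {t, n}, x = d * P * d') →
      ∃ d ∈ Subgroup.closure {t, n}, ∃ P ∈ Submonoid.closure {a, t * a * t},
        ∃ d' ∈ Subgroup.closure {t, n}, s * x = d * P * d' := by
    rintro s hs x ⟨d, hd, P, hP, d', hd', rfl⟩
    obtain ⟨e, he, P', hP', e', he', h⟩ :=
      mul_pos _ (conj_mem_of_mem_closure ht hn h₁ h₂ hd s hs) P hP
    refine ⟨d * e, mul_mem hd he, P', hP', e' * d', mul_mem he' hd', ?_⟩
    calc s * (d * P * d') = d * (d⁻¹ * s * d * P) * d' := by group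
      _ = _ := by rw [h]; group
  induction hg using Subgroup.closure_induction_left with
  | one => exact ⟨1, one_mem _, 1, one_mem _, 1, one_mem _, by simp⟩
  | mul_left s hs x _ ih =>
    rcases hs with rfl | rfl | rfl
    · obtain ⟨d, hd, P, hP, d', hd', rfl⟩ := ih
      exact ⟨_, mul_mem htD hd, P, hP, d', hd', by simp only [mul_assoc]⟩
    · obtain ⟨d, hd, P, hP, d', hd', rfl⟩ := ih
      exact ⟨_, mul_mem hnD hd, P, hP, d', hd', by simp only [mul_assoc]⟩
    · exact step s (by simp) x ih
  | inv_mul_cancel s hs x _ ih =>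
    rcases hs with rfl | rfl | rfl
    · obtain ⟨d, hd, P, hP, d', hd', rfl⟩ := ih
      exact ⟨_, mul_mem (inv_mem htD) hd, P, hP, d', hd', by simp only [mul_assoc]⟩
    · obtain ⟨d, hd, P, hP, d', hd', rfl⟩ := ih
      exact ⟨_, mul_mem (inv_mem hnD) hd, P, hP, d', hd', by simp only [mul_assoc]⟩
    · exact step s⁻¹ (by simp) x ih

end Factorization

namespace FreeGroup

@[simp] theorem σ_mul (i : Fin 2) (u v : FreeGroup (Fin 2)) : σ i (u * v) = σ i u + σ i v := by
  simp [σ]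

@[simp] theorem σ_inv (i : Fin 2) (u : FreeGroup (Fin 2)) : σ i u⁻¹ = -σ i u := by
  simp [σ]

@[simp] theorem σ_of (i j : Fin 2) : σ i (of j) = if j = i then 1 else 0 := by
  simp [σ, expSum]

theorem σ_mk_singleton (i : Fin 2) (p : Fin 2 × Bool) :
    σ i (mk [p]) = if p.1 = i then (if p.2 then 1 else -1) else 0 := by
  obtain ⟨j, b⟩ := p
  cases b
  · rw [← Bool.not_true, mk_not, σ_inv, show mk [(j, true)] = of j from rfl, σ_of]
    split_ifs <;> simp_all
  · rw [show mk [(j, true)] = of j from rfl, σ_of]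
    split_ifs <;> simp_all

theorem eq_one_or_of_mem_closure {P : MulAut (FreeGroup (Fin 2))}
    (hP : P ∈ Submonoid.closure {mulAut, swapAut * mulAut * swapAut}) :
    (∀ j, 1 ≤ σ 0 (P (of j)) + σ 1 (P (of j))) ∧
      (P = 1 ∨ 3 ≤ σ 0 (P (of 0)) + σ 1 (P (of 0)) + (σ 0 (P (of 1)) + σ 1 (P (of 1)))) := by
  induction hP using Submonoid.closure_induction_right with
  | one => exact ⟨fun j => by fin_cases j <;> simp, Or.inl rfl⟩
  | mul_right x _ s hs ih =>
    obtain ⟨ih, -⟩ := ih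
    have h0 := ih 0
    have h1 := ih 1
    rcases hs with rfl | rfl
    · refine ⟨fun j => ?_, Or.inr ?_⟩
      · fin_cases j
        · simpa using h0
        · simp; omega
      · simp; omega
    · refine ⟨fun j => ?_, Or.inr ?_⟩
      · fin_cases j
        · simp; omega
        · simpa using h1
      · simp; omega

/-- Modulo inner automorphisms, every automorphism of the free group of rank two is a product of a
positive automorphism with signed permutations of the generators. -/
theorem exists_eq_conj_mul (φ : MulAut (FreeGroup (Fin 2))) :
    ∃ u, ∃ d ∈ signedPermAut, ∃ P ∈ Submonoid.closure {mulAut, swapAut * mulAut * swapAut},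
      ∃ d' ∈ signedPermAut, φ = MulAut.conj u * (d * P * d') := by
  let π : MulAut (FreeGroup (Fin 2)) →* Out (FreeGroup (Fin 2)) := QuotientGroup.mk' _
  have hconj : ∀ u, π (MulAut.conj u) = 1 := fun u =>
    (QuotientGroup.eq_one_iff _).2 (conj_mem_innAut u)
  have h₁ : π invAut * π mulAut * π invAut = (π mulAut)⁻¹ := by
    rw [← _root_.map_mul, ← _root_.map_mul, eq_inv_iff_mul_eq_one, ← _root_.map_mul, ← π.map_one]
    congr 1
    apply mulAut_ext <;> simp
  have h₂ : π swapAut * π invAut * π swapAut * π mulAut * (π swapAut * π invAut * π swapAut) =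
      (π mulAut)⁻¹ := by
    simp only [← _root_.map_mul]
    rw [eq_inv_iff_mul_eq_one, ← _root_.map_mul, ← hconj (of 0)]
    congr 1
    apply mulAut_ext <;> simp [mul_assoc]
  have h₃ : (π mulAut)⁻¹ * (π swapAut * π mulAut * π swapAut) =
      π invAut * π swapAut * π mulAut := by
    simp only [← _root_.map_mul]
    rw [inv_mul_eq_iff_eq_mul, ← one_mul (π _ * π _), ← hconj (of 0)⁻¹]
    simp only [← _root_.map_mul]
    congr 1
    apply mulAut_ext <;> simp [mul_assoc]
  have hmem : π φ ∈ Subgroup.closure {π swapAut, π invAut, π mulAut} := by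
    have h : φ ∈ nielsenAut ⊔ innAut (FreeGroup (Fin 2)) := nielsenAut_sup_innAut ▸ trivial
    obtain ⟨ψ, hψ, ι, hι, rfl⟩ := Subgroup.mem_sup_of_normal_right.1 h
    have : π ι = 1 := (QuotientGroup.eq_one_iff _).2 hι
    rw [_root_.map_mul, this, mul_one]
    have := Subgroup.mem_map_of_mem π hψ
    rwa [nielsenAut, MonoidHom.map_closure, Set.image_insert_eq, Set.image_pair] at this
  obtain ⟨d, hd, P, hP, d', hd', h⟩ := exists_eq_mul_mul_of_mem_closure
    (by rw [← _root_.map_mul, swapAut_mul_self, _root_.map_one])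
    (by rw [← _root_.map_mul, invAut_mul_self, _root_.map_one]) h₁ h₂ h₃ hmem
  rw [← Set.image_pair, ← MonoidHom.map_closure] at hd hd'
  rw [← _root_.map_mul, ← _root_.map_mul, ← Set.image_pair, ← MonoidHom.map_mclosure] at hP
  obtain ⟨d, hd, rfl⟩ := hd
  obtain ⟨d', hd', rfl⟩ := hd'
  obtain ⟨P, hP, rfl⟩ := hP
  have : π (φ * (d * P * d')⁻¹) = 1 := by
    rw [_root_.map_mul, _root_.map_inv, h, _root_.map_mul, _root_.map_mul, mul_inv_cancel]
  obtain ⟨u, hu⟩ := (QuotientGroup.eq_one_iff _).1 this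
  exact ⟨u, d, hd, P, hP, d', hd', by rw [hu, inv_mul_cancel_right]⟩

/-- An automorphism of the free group of rank two acting trivially on the abelianization is
inner. -/
theorem exists_eq_conj_of_forall_hom {φ : MulAut (FreeGroup (Fin 2))}
    (hφ : ∀ (f : FreeGroup (Fin 2) →* Multiplicative ℤ) (w), f (φ w) = f w) :
    ∃ u, φ = MulAut.conj u := by
  obtain ⟨u, d, hd, P, hP, d', hd', h⟩ := exists_eq_conj_mul φ
  have hdPd : ∀ (f : FreeGroup (Fin 2) →* Multiplicative ℤ) (w), f (d (P (d' w))) = f w := by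
    intro f w
    have := hφ f w
    simpa [h, mul_comm] using this
  have hσ : ∀ i w, σ i (P w) = σ i ((d' * d)⁻¹ w) := by
    intro i w
    have := hdPd ((expSum i).comp (d⁻¹).toMonoidHom) (d'⁻¹ w)
    simpa [σ] using this
  have hP1 : P = 1 := by
    refine (eq_one_or_of_mem_closure hP).2.resolve_right fun h3 => ?_
    obtain ⟨p, hp⟩ := exists_map_of_eq_mk (inv_mem (mul_mem hd' hd)) 0
    obtain ⟨q, hq⟩ := exists_map_of_eq_mk (inv_mem (mul_mem hd' hd)) 1
    simp only [hσ, hp, hq, σ_mk_singleton] at h3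
    split_ifs at h3 <;> omega
  subst hP1
  have hone : d * d' = 1 := by
    have : ∀ j, (d * d') (of j) = of j := by
      intro j
      obtain ⟨⟨i, b⟩, hp⟩ := exists_map_of_eq_mk (mul_mem hd hd') j
      have := congrArg Multiplicative.toAdd (hdPd (expSum j) (of j))
      change σ j ((d * d') (of j)) = σ j (of j) at this
      rw [hp, σ_mk_singleton, σ_of, if_pos rfl] at this
      split_ifs at this with h1 h2
      · simp only at h1 h2
        rw [hp, h1, h2]
        rfl
      all_goals omega
    exact mulAut_ext (this 0) (this 1)
  exact ⟨u, by rw [h, mul_one, hone, mul_one]⟩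

end FreeGroup

theorem statement_17 (rels : Set (FreeGroup (Fin 2)))
    (hrels : rels ⊆ ↑(commutator (FreeGroup (Fin 2))))
    (φ : MulAut (FreeGroup (Fin 2)))
    (hinner : ∃ g : PresentedGroup rels, ∀ w : FreeGroup (Fin 2),
      PresentedGroup.mk rels (φ w) = g * PresentedGroup.mk rels w * g⁻¹) :
    ∃ u : FreeGroup (Fin 2), ∀ w : FreeGroup (Fin 2), φ w = u * w * u⁻¹ := by
  obtain ⟨g, hg⟩ := hinner
  obtain ⟨u, hu⟩ := FreeGroup.exists_eq_conj_of_forall_hom (φ := φ) fun f w => by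
    have hf : commutator (FreeGroup (Fin 2)) ≤ f.ker := Abelianization.commutator_subset_ker f
    have hlift : ∀ r ∈ rels, FreeGroup.lift (fun i => f (FreeGroup.of i)) r = 1 := by
      intro r hr
      rw [show FreeGroup.lift (fun i => f (FreeGroup.of i)) = f by ext i; simp]
      exact hf (hrels hr)
    have hmk : ∀ v, PresentedGroup.toGroup hlift (PresentedGroup.mk rels v) = f v := fun v =>
      DFunLike.congr_fun (show (PresentedGroup.toGroup hlift).comp (PresentedGroup.mk rels) = f by
        ext i; exact congrArg Multiplicative.toAdd (PresentedGroup.toGroup.of hlift)) v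
    have := congrArg (PresentedGroup.toGroup hlift) (hg w)
    rwa [map_mul, map_mul, map_inv, hmk, hmk, mul_inv_cancel_comm] at this
  exact ⟨u, fun w => by rw [hu, MulAut.conj_apply]⟩
end
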